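/- arXiv:1512.00587 — 8 statements merged into one kernel-verified Lean document; each statement's English description precedes it below -/
import Mathlib

section
/- Let A be a finite alphabet with |A| ≥ 2. Every normal amenable subgroup of Aut(A^ℤ) is contained in Σ(A^ℤ), the subgroup consisting of the powers of the shift σ. -/
/-!
The proof is a finitary form of the argument that a normal amenable subgroup acts trivially on an
extremely proximal boundary. Fix a letter `o`. The boundary consists of the nonconstant
configurations that are equal to `o` far to the left (`Tail o`), taken modulo the shift; it is not
formed as a quotient, and shift-invariant subsets of `Tail o` are used instead. Such a configuration
has a first letter different from `o`, and `Cyl` collects those with a prescribed initial word.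

The automorphisms used are the marker involutions `flipAut`. They exchange `o^ℓ` and a word `w` in
front of every position `q` whose letter is not `o`, whose next letter lies in `B`, and in front of
which, beyond these `ℓ` letters, there is a long run of `o`. If `w` starts with a letter other than
`o` followed by a letter outside `B`, distinct such positions are far apart (`active_sep`), so that
this is indeed an involution. On `Tail o` it writes `w` in front of every configuration whose second
letter lies in `B` (`flip_second`).

Suppose a normal subgroup `N` contains an element `n` which is not a power of the shift. Replacing
`n` by its commutator with a marker involution if necessary, `n` fixes the constant configuration
`o` (`exists_fixing`). Since `n` does not act as a power of the shift on a configuration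
`⋯ o o a a ⋯` with dense orbit, it moves some cylinder `U`, given by a word starting with `a a`, off
itself (`exists_moved_cyl`). An invariant mean on `N` induces an `N`-invariant finitely additive
measure on `Tail o`, of total mass `c > 0` because the stabilizer of the constant configuration has
finite index in `N` (`stabilizer_pos`). Each translate `k U` by an automorphism `k` fixing the
constant configuration is moved off itself by a conjugate of `n`, which lies in `N`, so `k U` has
mass at most `c / 2`. Let `V` be the set of configurations in `Tail o` with second letter different
from `o`. A marker involution maps the complement of `V` into `U`, hence every translate of `V` has
mass at least `c / 2`. Marker involutions writing `a o o` and `a o a` produce three pairwise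
disjoint translates of `V`, which is absurd (`no_fixing`).
-/

/-- The group of self-homeomorphisms of a topological space,
with `(f * g) x = f (g x)`. -/
instance homeoGroup (X : Type*) [TopologicalSpace X] : Group (X ≃ₜ X) where
  mul f g := g.trans f
  one := Homeomorph.refl X
  inv := Homeomorph.symm
  mul_assoc f g h := Homeomorph.ext fun _ => rfl
  one_mul f := Homeomorph.ext fun _ => rfl
  mul_one f := Homeomorph.ext fun _ => rfl
  inv_mul_cancel f := Homeomorph.ext f.symm_apply_apply

/-- A group is amenable if there is a left-invariant mean on its
bounded real-valued functions. -/
def IsAmenable (G : Type*) [Group G] : Prop :=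
  ∃ m : (G → ℝ) → ℝ,
    (∀ f₁ f₂ : G → ℝ, (∃ C, ∀ x, |f₁ x| ≤ C) → (∃ C, ∀ x, |f₂ x| ≤ C) →
      m (f₁ + f₂) = m f₁ + m f₂) ∧
    (∀ (c : ℝ) (f : G → ℝ), (∃ C, ∀ x, |f x| ≤ C) → m (c • f) = c * m f) ∧
    (∀ f : G → ℝ, (∃ C, ∀ x, |f x| ≤ C) → (∀ x, 0 ≤ f x) → 0 ≤ m f) ∧
    m (fun _ => 1) = 1 ∧
    (∀ (g : G) (f : G → ℝ), (∃ C, ∀ x, |f x| ≤ C) →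
      m (fun x => f (g * x)) = m f)

/-- The left shift `(σ x) m = x (m+1)` on `A^ℤ`, as a homeomorphism. -/
def shiftHomeo (A : Type*) [TopologicalSpace A] : (ℤ → A) ≃ₜ (ℤ → A) where
  toFun x := fun m => x (m + 1)
  invFun x := fun m => x (m - 1)
  left_inv x := funext fun m => by simp
  right_inv x := funext fun m => by simp
  continuous_toFun := continuous_pi fun m => continuous_apply (m + 1)
  continuous_invFun := continuous_pi fun m => continuous_apply (m - 1)

/-- `Aut(A^ℤ)`: the group of homeomorphisms of `A^ℤ` commuting with the shift. -/
def ShiftAut (A : Type*) [TopologicalSpace A] : Subgroup ((ℤ → A) ≃ₜ (ℤ → A)) :=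
  Subgroup.centralizer {shiftHomeo A}

namespace FullShift

/-! ### Translations and locality -/

section Basic

variable {A : Type*}

/-- The `k`-th power of the shift, as a plain function. -/
def sh (k : ℤ) (x : ℤ → A) : ℤ → A := fun m => x (m + k)

variable [TopologicalSpace A]

lemma shiftHomeo_apply (x : ℤ → A) : shiftHomeo A x = sh 1 x := rfl

lemma shiftHomeo_inv_apply (x : ℤ → A) : (shiftHomeo A)⁻¹ x = sh (-1) x := rfl

lemma mul_apply (f g : (ℤ → A) ≃ₜ (ℤ → A)) (x : ℤ → A) : (f * g) x = f (g x) := rfl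

lemma one_apply (x : ℤ → A) : (1 : (ℤ → A) ≃ₜ (ℤ → A)) x = x := rfl

lemma shift_zpow_apply (k : ℤ) (x : ℤ → A) : (shiftHomeo A ^ k) x = sh k x := by
  induction k using Int.induction_on generalizing x with
  | zero => funext m; simp [sh]
  | succ i ih =>
    rw [zpow_add_one, mul_apply, ih, shiftHomeo_apply]
    funext m; simp only [sh]; congr 1; ring
  | pred i ih =>
    rw [zpow_sub_one, mul_apply, ih, shiftHomeo_inv_apply]
    funext m; simp only [sh]; congr 1; ring

lemma aut_sh (g : ShiftAut A) (k : ℤ) (x : ℤ → A) : g.1 (sh k x) = sh k (g.1 x) := by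
  have h1 : Commute (shiftHomeo A) g.1 :=
    Subgroup.mem_centralizer_iff.1 g.2 _ rfl
  have h2 := congrArg (fun f : (ℤ → A) ≃ₜ (ℤ → A) => f x) (h1.zpow_left k).eq
  simp only [mul_apply, shift_zpow_apply] at h2
  exact h2.symm

lemma aut_inv_apply_self (g : ShiftAut A) (x : ℤ → A) : (g⁻¹).1 (g.1 x) = x :=
  g.1.symm_apply_apply x

lemma aut_apply_inv_self (g : ShiftAut A) (x : ℤ → A) : g.1 ((g⁻¹).1 x) = x :=
  g.1.apply_symm_apply x

lemma aut_const (g : ShiftAut A) (a : A) : ∃ b, g.1 (fun _ => a) = fun _ => b := by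
  refine ⟨g.1 (fun _ => a) 0, funext fun m => ?_⟩
  have := congrFun (aut_sh g m (fun _ => a)) 0
  have h2 : sh m (fun _ : ℤ => a) = fun _ => a := rfl
  rw [h2] at this
  simpa [sh] using this.symm

/-- Curtis–Hedlund–Lyndon: an automorphism of the full shift is given by a local rule of some
radius `r`. -/
lemma exists_radius [Finite A] [DiscreteTopology A] (g : ShiftAut A) :
    ∃ r : ℤ, 0 ≤ r ∧ ∀ x x' : ℤ → A, ∀ m,
      (∀ i, m - r ≤ i → i ≤ m + r → x i = x' i) → g.1 x m = g.1 x' m := by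
  suffices h : ∃ r : ℕ, ∀ x x' : ℤ → A,
      (∀ i : ℤ, -r ≤ i → i ≤ r → x i = x' i) → g.1 x 0 = g.1 x' 0 by
    obtain ⟨r, hr⟩ := h
    refine ⟨r, by positivity, fun x x' m hx => ?_⟩
    have h1 := hr (sh m x) (sh m x') fun i h1 h2 => hx _ (by omega) (by omega)
    rw [aut_sh, aut_sh] at h1
    simpa [sh] using h1
  by_contra! hcon
  -- Pairs agreeing on `[-r, r]` with distinct images at `0` form a decreasing sequence of
  -- nonempty compact sets.
  let K : ℕ → Set ((ℤ → A) × (ℤ → A)) := fun r =>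
    {p | (∀ i : ℤ, -r ≤ i → i ≤ r → p.1 i = p.2 i) ∧ g.1 p.1 0 ≠ g.1 p.2 0}
  have hg : Continuous fun x => g.1 x 0 := (continuous_apply 0).comp g.1.continuous
  have hcl : ∀ r, IsClosed (K r) := fun r => by
    refine IsClosed.inter ?_ ?_
    · have : IsClosed (⋂ (i : ℤ) (_ : -(r : ℤ) ≤ i) (_ : i ≤ (r : ℤ)),
          {p : (ℤ → A) × (ℤ → A) | p.1 i = p.2 i}) :=
        isClosed_iInter fun i => isClosed_iInter fun _ => isClosed_iInter fun _ =>
          isClosed_eq (by fun_prop) (by fun_prop)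
      simp only [← Set.ofPred_forall] at this
      exact this
    · have : IsClosed ((fun p : (ℤ → A) × (ℤ → A) => (g.1 p.1 0, g.1 p.2 0)) ⁻¹'
          {q : A × A | q.1 ≠ q.2}) :=
        (isClosed_discrete _).preimage ((hg.comp continuous_fst).prodMk (hg.comp continuous_snd))
      exact this
  obtain ⟨p, hp⟩ := IsCompact.nonempty_iInter_of_sequence_nonempty_isCompact_isClosed K
    (fun r p hp => ⟨fun i h1 h2 => hp.1 i (by push_cast; omega) (by push_cast; omega), hp.2⟩)
    (fun r => by obtain ⟨x, x', h1, h2⟩ := hcon r; exact ⟨(x, x'), h1, h2⟩)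
    (hcl 0).isCompact hcl
  simp only [Set.mem_iInter] at hp
  have : p.1 = p.2 := funext fun i => (hp i.natAbs).1 i (by omega) (by omega)
  exact (hp 0).2 (by rw [this])

lemma continuous_of_window [DiscreteTopology A] (F : (ℤ → A) → A) (a b : ℤ)
    (h : ∀ x x' : ℤ → A, (∀ i, a ≤ i → i ≤ b → x i = x' i) → F x = F x') : Continuous F := by
  rw [continuous_iff_continuousAt]
  intro x
  have h1 : (Set.Icc a b).pi (fun i => {x i}) ∈ nhds x :=
    (isOpen_set_pi (Set.finite_Icc a b) fun i _ => isOpen_discrete _).mem_nhds (by simp)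
  refine (continuousAt_const (y := F x)).congr ?_
  filter_upwards [h1] with x' hx'
  exact h x x' fun i h1 h2 => (hx' i ⟨h1, h2⟩).symm

lemma mem_closure_of_windows [DiscreteTopology A] (S : Set (ℤ → A)) (x : ℤ → A)
    (h : ∀ M : ℕ, ∃ s ∈ S, ∀ i : ℤ, -M ≤ i → i ≤ M → s i = x i) : x ∈ closure S := by
  choose s hs hsx using h
  refine mem_closure_of_tendsto (f := s) (b := Filter.atTop) ?_ (Filter.Eventually.of_forall hs)
  rw [tendsto_pi_nhds]
  intro i
  refine tendsto_const_nhds.congr' ?_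
  filter_upwards [Filter.eventually_ge_atTop i.natAbs] with M hM
  exact (hsx M i (by omega) (by omega)).symm

end Basic

/-! ### The marker involutions -/

section Marker

variable {A : Type*} (o : A) (B : Set A) (w : ℤ → A) (ℓ L : ℤ)

/-- The configuration `x` can be rewritten in front of `q`: the letter at `q` is not `o`, the next
one lies in `B`, and `q` is preceded by `o^L o^ℓ` or by `o^L w`, where `w` stands for the word
`w 0 ⋯ w (ℓ - 1)`. -/
def Active (x : ℤ → A) (q : ℤ) : Prop :=
  x q ≠ o ∧ x (q + 1) ∈ B ∧ (∀ i, q - L - ℓ ≤ i → i < q - ℓ → x i = o) ∧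
    ((∀ i, q - ℓ ≤ i → i < q → x i = o) ∨ (∀ i, q - ℓ ≤ i → i < q → x i = w (i - q + ℓ)))

open Classical in
/-- The map exchanging `o^ℓ` and `w` in front of every active position. -/
noncomputable def flip (x : ℤ → A) : ℤ → A := fun i =>
  if h : ∃ q, i < q ∧ q ≤ i + ℓ ∧ Active o B w ℓ L x q
  then Equiv.swap o (w (i - h.choose + ℓ)) (x i) else x i

variable {o B w ℓ L}

/-- Distinct active positions are so far apart that rewriting in front of one of them does not
affect the other. -/
lemma active_sep (hw0 : w 0 ≠ o) (hw1 : w 1 ∉ B) (hℓ : 2 ≤ ℓ) (hL : ℓ ≤ L) {x : ℤ → A} {q q' : ℤ}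
    (hq : Active o B w ℓ L x q) (hq' : Active o B w ℓ L x q') (h : q < q') :
    q + L + ℓ < q' := by
  by_contra hlt
  obtain ⟨h1, h2, h3, h4⟩ := hq
  obtain ⟨h1', h2', h3', h4'⟩ := hq'
  have hge : q' - ℓ ≤ q := by
    by_contra hh
    exact h1 (h3' q (by omega) (by omega))
  have h5 : ∀ i, q' - ℓ ≤ i → i < q' → x i = w (i - q' + ℓ) :=
    h4'.resolve_left fun hz => h1 (hz q hge h)
  have h6 : x (q' - ℓ) = w 0 := by
    rw [h5 _ le_rfl (by omega)]; congr 1; ring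
  rcases hge.eq_or_lt with he | hl
  · apply hw1
    have h7 := h5 (q + 1) (by omega) (by omega)
    rw [show q + 1 - q' + ℓ = 1 by omega] at h7
    exact h7 ▸ h2
  · have h7 : ∀ i, q - ℓ ≤ i → i < q → x i = w (i - q + ℓ) :=
      h4.resolve_left fun hz => hw0 (h6 ▸ hz (q' - ℓ) (by omega) hl)
    have h8 : x (q - ℓ) = w 0 := by
      rw [h7 _ le_rfl (by omega)]; congr 1; ring
    exact hw0 (h8 ▸ h3' (q - ℓ) (by omega) (by omega))

lemma flip_of_not {x : ℤ → A} {i : ℤ}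
    (h : ∀ q, i < q → q ≤ i + ℓ → ¬ Active o B w ℓ L x q) : flip o B w ℓ L x i = x i := by
  unfold flip
  rw [dif_neg]
  rintro ⟨q, h1, h2, h3⟩
  exact h q h1 h2 h3

open Classical in
lemma flip_of_active (hw0 : w 0 ≠ o) (hw1 : w 1 ∉ B) (hℓ : 2 ≤ ℓ) (hL : ℓ ≤ L)
    {x : ℤ → A} {i q : ℤ} (hq : Active o B w ℓ L x q) (h1 : i < q) (h2 : q ≤ i + ℓ) :
    flip o B w ℓ L x i = Equiv.swap o (w (i - q + ℓ)) (x i) := by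
  have h : ∃ q, i < q ∧ q ≤ i + ℓ ∧ Active o B w ℓ L x q := ⟨q, h1, h2, hq⟩
  unfold flip
  rw [dif_pos h]
  have hc : h.choose = q := by
    obtain ⟨a1, a2, a3⟩ := h.choose_spec
    rcases lt_trichotomy h.choose q with hl | he | hl
    · have := active_sep hw0 hw1 hℓ hL a3 hq hl; omega
    · exact he
    · have := active_sep hw0 hw1 hℓ hL hq a3 hl; omega
  rw [hc]

lemma flip_near (hw0 : w 0 ≠ o) (hw1 : w 1 ∉ B) (hℓ : 2 ≤ ℓ) (hL : ℓ ≤ L)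
    {x : ℤ → A} {i q : ℤ} (hq : Active o B w ℓ L x q) (h1 : q - L - ℓ ≤ i) (h2 : i ≤ q + 1)
    (h3 : i < q - ℓ ∨ q ≤ i) : flip o B w ℓ L x i = x i := by
  refine flip_of_not fun q' a1 a2 a3 => ?_
  rcases lt_trichotomy q' q with hl | he | hl
  · have := active_sep hw0 hw1 hℓ hL a3 hq hl; omega
  · omega
  · have := active_sep hw0 hw1 hℓ hL hq a3 hl; omega

open Classical in
lemma active_flip_of_active (hw0 : w 0 ≠ o) (hw1 : w 1 ∉ B) (hℓ : 2 ≤ ℓ) (hL : ℓ ≤ L)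
    {x : ℤ → A} {q : ℤ} (hq : Active o B w ℓ L x q) :
    Active o B w ℓ L (flip o B w ℓ L x) q := by
  have hq0 := hq
  obtain ⟨h1, h2, h3, h4⟩ := hq0
  refine ⟨?_, ?_, ?_, ?_⟩
  · rwa [flip_near hw0 hw1 hℓ hL hq (by omega) (by omega) (by omega)]
  · rwa [flip_near hw0 hw1 hℓ hL hq (by omega) (by omega) (by omega)]
  · intro i a1 a2
    rw [flip_near hw0 hw1 hℓ hL hq (by omega) (by omega) (by omega)]
    exact h3 i a1 a2
  · rcases h4 with h4 | h4
    · refine Or.inr fun i a1 a2 => ?_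
      rw [flip_of_active hw0 hw1 hℓ hL hq a2 (by omega), h4 i a1 a2, Equiv.swap_apply_left]
    · refine Or.inl fun i a1 a2 => ?_
      rw [flip_of_active hw0 hw1 hℓ hL hq a2 (by omega), h4 i a1 a2, Equiv.swap_apply_right]

lemma active_congr {x x' : ℤ → A} {q : ℤ} (hℓ : 0 ≤ ℓ)
    (h : ∀ i, q - L - ℓ ≤ i → i ≤ q + 1 → x i = x' i) (hL : 0 ≤ L)
    (hq : Active o B w ℓ L x q) : Active o B w ℓ L x' q := by
  obtain ⟨h1, h2, h3, h4⟩ := hq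
  refine ⟨?_, ?_, fun i a b => ?_, ?_⟩
  · rwa [← h _ (by omega) (by omega)]
  · rwa [← h _ (by omega) (by omega)]
  · rw [← h _ (by omega) (by omega)]; exact h3 i a b
  · refine h4.imp (fun h4 i a b => ?_) (fun h4 i a b => ?_)
    · rw [← h _ (by omega) (by omega)]; exact h4 i a b
    · rw [← h _ (by omega) (by omega)]; exact h4 i a b

lemma active_flip_iff (hw0 : w 0 ≠ o) (hw1 : w 1 ∉ B) (hℓ : 2 ≤ ℓ) (hL : ℓ ≤ L)
    {x : ℤ → A} {q : ℤ} :
    Active o B w ℓ L (flip o B w ℓ L x) q ↔ Active o B w ℓ L x q := by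
  refine ⟨fun hq => ?_, active_flip_of_active hw0 hw1 hℓ hL⟩
  by_contra hn
  -- Any position active for `x` stays active, hence is far from `q`, so that `x` and its image
  -- agree around `q`.
  refine hn (active_congr (by omega) (fun i a1 a2 => ?_) (by omega) hq)
  refine flip_of_not fun q' b1 b2 b3 => ?_
  have b4 := active_flip_of_active hw0 hw1 hℓ hL b3
  rcases lt_trichotomy q' q with hl | he | hl
  · have := active_sep hw0 hw1 hℓ hL b4 hq hl; omega
  · exact hn (he ▸ b3)
  · have := active_sep hw0 hw1 hℓ hL hq b4 hl; omega

open Classical in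
lemma flip_flip (hw0 : w 0 ≠ o) (hw1 : w 1 ∉ B) (hℓ : 2 ≤ ℓ) (hL : ℓ ≤ L) (x : ℤ → A) :
    flip o B w ℓ L (flip o B w ℓ L x) = x := by
  funext i
  by_cases h : ∃ q, i < q ∧ q ≤ i + ℓ ∧ Active o B w ℓ L x q
  · obtain ⟨q, h1, h2, h3⟩ := h
    rw [flip_of_active hw0 hw1 hℓ hL (active_flip_of_active hw0 hw1 hℓ hL h3) h1 h2,
      flip_of_active hw0 hw1 hℓ hL h3 h1 h2, Equiv.swap_apply_self]
  · push Not at h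
    rw [flip_of_not fun q h1 h2 h3 => h q h1 h2 ((active_flip_iff hw0 hw1 hℓ hL).1 h3),
      flip_of_not h]

lemma active_sh {x : ℤ → A} {q k : ℤ} :
    Active o B w ℓ L (sh k x) q ↔ Active o B w ℓ L x (q + k) := by
  unfold Active sh
  rw [show q + 1 + k = q + k + 1 by ring]
  refine and_congr_right' (and_congr_right' (and_congr ?_ (or_congr ?_ ?_)))
  · exact ⟨fun h i a b => by simpa using h (i - k) (by omega) (by omega),
      fun h i a b => h (i + k) (by omega) (by omega)⟩
  · exact ⟨fun h i a b => by simpa using h (i - k) (by omega) (by omega),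
      fun h i a b => h (i + k) (by omega) (by omega)⟩
  · refine ⟨fun h i a b => ?_, fun h i a b => ?_⟩
    · have := h (i - k) (by omega) (by omega)
      rw [sub_add_cancel] at this
      rw [this]; congr 1; ring
    · rw [h (i + k) (by omega) (by omega)]; congr 1; ring

lemma flip_sh (hw0 : w 0 ≠ o) (hw1 : w 1 ∉ B) (hℓ : 2 ≤ ℓ) (hL : ℓ ≤ L) (x : ℤ → A) (k : ℤ) :
    flip o B w ℓ L (sh k x) = sh k (flip o B w ℓ L x) := by
  funext i
  by_cases h : ∃ q, i < q ∧ q ≤ i + ℓ ∧ Active o B w ℓ L (sh k x) q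
  · obtain ⟨q, h1, h2, h3⟩ := h
    rw [flip_of_active hw0 hw1 hℓ hL h3 h1 h2]
    simp only [sh]
    rw [flip_of_active hw0 hw1 hℓ hL (active_sh.1 h3) (by omega) (by omega)]
    congr 3; ring
  · push Not at h
    rw [flip_of_not h]
    simp only [sh]
    rw [flip_of_not]
    intro q h1 h2 h3
    refine h (q - k) (by omega) (by omega) (active_sh.2 ?_)
    rwa [sub_add_cancel]

lemma flip_window (hw0 : w 0 ≠ o) (hw1 : w 1 ∉ B) (hℓ : 2 ≤ ℓ) (hL : ℓ ≤ L) (x x' : ℤ → A)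
    (i : ℤ) (hx : ∀ j, i - L - ℓ ≤ j → j ≤ i + ℓ + 1 → x j = x' j) :
    flip o B w ℓ L x i = flip o B w ℓ L x' i := by
  have hi := hx i (by omega) (by omega)
  by_cases h : ∃ q, i < q ∧ q ≤ i + ℓ ∧ Active o B w ℓ L x q
  · obtain ⟨q, h1, h2, h3⟩ := h
    have h4 : Active o B w ℓ L x' q :=
      active_congr (by omega) (fun j _ _ => hx j (by omega) (by omega)) (by omega) h3
    rw [flip_of_active hw0 hw1 hℓ hL h3 h1 h2, flip_of_active hw0 hw1 hℓ hL h4 h1 h2, hi]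
  · push Not at h
    rw [flip_of_not h, flip_of_not, hi]
    intro q h1 h2 h3
    exact h q h1 h2
      (active_congr (by omega) (fun j _ _ => (hx j (by omega) (by omega)).symm) (by omega) h3)

/-- The marker involution `flip` is an automorphism of the full shift. -/
noncomputable def flipAut [TopologicalSpace A] [DiscreteTopology A]
    (hw0 : w 0 ≠ o) (hw1 : w 1 ∉ B) (hℓ : 2 ≤ ℓ) (hL : ℓ ≤ L) : ShiftAut A :=
  ⟨{ toFun := flip o B w ℓ L
     invFun := flip o B w ℓ L
     left_inv := flip_flip hw0 hw1 hℓ hL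
     right_inv := flip_flip hw0 hw1 hℓ hL
     continuous_toFun := continuous_pi fun i => continuous_of_window _ _ _ fun x x' h =>
      flip_window hw0 hw1 hℓ hL x x' i h
     continuous_invFun := continuous_pi fun i => continuous_of_window _ _ _ fun x x' h =>
      flip_window hw0 hw1 hℓ hL x x' i h }, by
    rw [ShiftAut, Subgroup.mem_centralizer_iff]
    rintro _ rfl
    exact Homeomorph.ext fun x => (flip_sh hw0 hw1 hℓ hL x 1).symm⟩

lemma flip_const (hL : 0 < L) (c : A) : flip o B w ℓ L (fun _ => c) = fun _ => c :=
  funext fun _ => flip_of_not fun q _ _ h => h.1 (h.2.2.1 (q - L - ℓ) le_rfl (by omega))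

end Marker

/-! ### Configurations with a left tail of `o` -/

section Lead

variable {A : Type*} {o : A}

/-- `p` is the position of the first letter of `x` different from `o`. -/
def Lead (o : A) (x : ℤ → A) (p : ℤ) : Prop := x p ≠ o ∧ ∀ i, i < p → x i = o

lemma Lead.unique {x : ℤ → A} {p p' : ℤ} (h : Lead o x p) (h' : Lead o x p') : p = p' := by
  rcases lt_trichotomy p p' with hl | he | hl
  · exact absurd (h'.2 p hl) h.1
  · exact he
  · exact absurd (h.2 p' hl) h'.1

lemma Lead.sh {x : ℤ → A} {p : ℤ} (h : Lead o x p) (k : ℤ) : Lead o (sh k x) (p - k) := by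
  refine ⟨?_, fun i hi => h.2 _ (by omega)⟩
  simpa [FullShift.sh] using h.1

/-- The configurations other than the constant one that are equal to `o` far to the left. -/
def Tail (o : A) : Set (ℤ → A) := {x | ∃ p, Lead o x p}

/-- The configurations in `Tail o` whose first `ℓ` letters, from the first letter different
from `o` on, are those of `w`. -/
def Cyl (o : A) (w : ℤ → A) (ℓ : ℤ) : Set (ℤ → A) :=
  {x | ∃ p, Lead o x p ∧ ∀ j, 0 ≤ j → j < ℓ → x (p + j) = w j}

/-- The configurations in `Tail o` whose second letter, counted from the first letter different
from `o`, lies in `B`. -/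
def Second (o : A) (B : Set A) : Set (ℤ → A) := {x | ∃ p, Lead o x p ∧ x (p + 1) ∈ B}

lemma tail_of_bound {x : ℤ → A} (hx : x ≠ fun _ => o) (r : ℤ) (hr : ∀ i, i < r → x i = o) :
    x ∈ Tail o := by
  have hne : ∃ i, x i ≠ o := by
    by_contra! h
    exact hx (funext h)
  obtain ⟨p, hp, hmin⟩ := Int.exists_least_of_bdd (P := fun i => x i ≠ o)
    ⟨r, fun z hz => not_lt.1 fun h => hz (hr z h)⟩ hne
  refine ⟨p, hp, fun i hi => ?_⟩
  by_contra h
  exact absurd (hmin i h) (by omega)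

lemma aut_tail [TopologicalSpace A] [DiscreteTopology A] [Finite A] (g : ShiftAut A)
    (hg : g.1 (fun _ => o) = fun _ => o) {x : ℤ → A} (hx : x ∈ Tail o) : g.1 x ∈ Tail o := by
  obtain ⟨p, hp⟩ := hx
  obtain ⟨r, -, hr⟩ := exists_radius g
  refine tail_of_bound (fun h => ?_) (p - r) fun i hi => ?_
  · rw [← hg] at h
    exact hp.1 (congrFun (g.1.injective h) p)
  · rw [hr x (fun _ => o) i fun j _ _ => hp.2 j (by omega), hg]

open Classical in
/-- A marker involution writes the word `w` in front of the configurations in `Second o B`. -/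
lemma flip_second {B : Set A} {w : ℤ → A} {ℓ L : ℤ}
    (hw0 : w 0 ≠ o) (hw1 : w 1 ∉ B) (hℓ : 2 ≤ ℓ) (hL : ℓ ≤ L) {x : ℤ → A}
    (hx : x ∈ Second o B) : flip o B w ℓ L x ∈ Cyl o w ℓ := by
  obtain ⟨p, hp, hB⟩ := hx
  have hact : Active o B w ℓ L x p :=
    ⟨hp.1, hB, fun i _ _ => hp.2 i (by omega), Or.inl fun i _ h => hp.2 i h⟩
  have key : ∀ j, 0 ≤ j → j < ℓ → flip o B w ℓ L x (p - ℓ + j) = w j := by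
    intro j h0 h1
    rw [flip_of_active hw0 hw1 hℓ hL hact (by omega) (by omega), hp.2 _ (by omega),
      Equiv.swap_apply_left]
    congr 1; ring
  refine ⟨p - ℓ, ⟨?_, fun i hi => ?_⟩, key⟩
  · have := key 0 le_rfl (by omega)
    rw [add_zero] at this
    rwa [this]
  · rw [flip_of_not, hp.2 i (by omega)]
    intro q h1 h2 h3
    exact h3.1 (hp.2 q (by omega))

end Lead


/-! ### A transitive configuration -/

section Transitive

variable {A : Type*} [TopologicalSpace A] [DiscreteTopology A] [Finite A]

/-- There is a configuration `⋯ o o a a ⋯` whose shifts are dense. -/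
lemma exists_transitive (o a : A) (ha : a ≠ o) :
    ∃ y : ℤ → A, Lead o y 0 ∧ y 0 = a ∧ y 1 = a ∧ DenseRange fun k => sh k y := by
  have : Nonempty (ℤ → A) := ⟨fun _ => o⟩
  obtain ⟨d, hd⟩ := TopologicalSpace.exists_dense_seq (ℤ → A)
  -- On `[2^j, 2^(j+1))` the configuration is a translate of `d k`, where `k` is the second
  -- component of `j` under the pairing function, so that each `k` occurs for arbitrarily large `j`.
  let y : ℤ → A := fun m => if m < 0 then o else if m ≤ 1 then a else
    d (Nat.log 2 m.toNat).unpair.2 (m - 2 ^ (Nat.log 2 m.toNat) - (Nat.log 2 m.toNat : ℕ))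
  have y0 : y 0 = a := by simp [y]
  have y1 : y 1 = a := by simp [y]
  refine ⟨y, ⟨by rwa [y0], fun i hi => by simp [y, hi]⟩, y0, y1, ?_⟩
  have hsub : Set.range d ⊆ closure (Set.range fun k => sh k y) := by
    rintro _ ⟨k, rfl⟩
    refine mem_closure_of_windows _ _ fun M => ?_
    set j : ℕ := Nat.pair (M + 3) k with hj
    have hjM : M + 3 ≤ j := Nat.left_le_pair _ _
    have hpow : 2 * j < 2 ^ j := by
      have : ∀ t : ℕ, 2 * (t + 3) < 2 ^ (t + 3) := by
        intro t
        induction t with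
        | zero => norm_num
        | succ t ih => rw [show t + 1 + 3 = (t + 3) + 1 by ring, pow_succ]; omega
      have h := this (j - 3)
      rwa [show j - 3 + 3 = j by omega] at h
    refine ⟨_, ⟨(2 ^ j + j : ℕ), rfl⟩, fun i h1 h2 => ?_⟩
    have hlog : Nat.log 2 (i + ((2 ^ j + j : ℕ) : ℤ)).toNat = j := by
      rw [Nat.log_eq_iff (Or.inl (by omega)), pow_succ]
      omega
    simp only [sh, y]
    rw [if_neg (by omega), if_neg (by omega), hlog, hj, Nat.unpair_pair, ← hj]
    congr 1
    push_cast
    ring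
  exact dense_closure.1 (hd.mono hsub)

/-- An automorphism acting on a transitive configuration as a power of the shift is that power. -/
lemma eq_shift_of_transitive {y : ℤ → A} (hy : DenseRange fun k => sh k y) (n : ShiftAut A) (k : ℤ)
    (h : n.1 y = sh k y) : n.1 ∈ Subgroup.zpowers (shiftHomeo A) := by
  refine ⟨k, ?_⟩
  refine Homeomorph.ext fun x => congrFun ?_ x
  refine hy.equalizer (shiftHomeo A ^ k).continuous n.1.continuous (funext fun t => ?_)
  simp only [Function.comp]
  rw [shift_zpow_apply, aut_sh, h]
  funext m
  simp only [sh]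
  congr 1; ring

/-- An automorphism fixing the constant configuration `o` which is not a power of the shift moves
some cylinder, given by a prefix of a transitive configuration, off itself. -/
lemma exists_moved_cyl {o : A} {y : ℤ → A} (hy0 : Lead o y 0) (hy : DenseRange fun k => sh k y)
    (n : ShiftAut A) (hno : n.1 (fun _ => o) = fun _ => o)
    (hn : n.1 ∉ Subgroup.zpowers (shiftHomeo A)) :
    ∃ ℓ : ℤ, 2 ≤ ℓ ∧ ∀ x ∈ Cyl o y ℓ, n.1 x ∉ Cyl o y ℓ := by
  obtain ⟨r, hr0, hr⟩ := exists_radius n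
  obtain ⟨p, hp⟩ := aut_tail n hno ⟨0, hy0⟩
  have hdiff : ∃ j, 0 ≤ j ∧ n.1 y (p + j) ≠ y j := by
    by_contra! hcon
    refine hn (eq_shift_of_transitive hy n (-p) (funext fun m => ?_))
    simp only [sh]
    rcases lt_or_ge m p with h | h
    · rw [hp.2 m h, hy0.2 _ (by omega)]
    · have := hcon (m + -p) (by omega)
      rwa [show p + (m + -p) = m by ring] at this
  obtain ⟨j, hj, hne⟩ := hdiff
  refine ⟨max 2 (max (p + j + r + 1) (j + 1)), le_max_left _ _, ?_⟩
  set ℓ := max 2 (max (p + j + r + 1) (j + 1)) with hℓ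
  have hℓ1 : p + j + r < ℓ := by omega
  have hℓ2 : j < ℓ := by omega
  rintro x ⟨s, hs, hsy⟩ ⟨t, ht, hty⟩
  -- Up to translation `x` agrees with `y` on `(-∞, ℓ)`.
  have hxy : ∀ i, i < ℓ → sh s x i = y i := by
    intro i hi
    rcases lt_or_ge i 0 with h | h
    · rw [hy0.2 i h]; exact hs.2 _ (by omega)
    · rw [← hsy i h hi]; simp only [sh]; congr 1; ring
  have hnxy : ∀ i, i ≤ p + j → n.1 x (i + s) = n.1 y i := by
    intro i hi
    have h1 := hr (sh s x) y i fun t _ _ => hxy t (by omega)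
    rwa [aut_sh] at h1
  have hlead : Lead o (n.1 x) (p + s) := by
    refine ⟨?_, fun i hi => ?_⟩
    · rw [hnxy p (by omega)]; exact hp.1
    · have := hnxy (i - s) (by omega)
      rw [sub_add_cancel] at this
      rw [this]; exact hp.2 _ (by omega)
  have hs2 := ht.unique hlead
  subst hs2
  apply hne
  rw [← hty j hj hℓ2, ← hnxy (p + j) le_rfl, add_right_comm]

end Transitive

/-! ### Finitely additive measures from means -/

section Mean

variable {G : Type*}

/-- The invariant mean of an amenable group restricted to indicator functions. -/
lemma exists_measure [Group G] (h : IsAmenable G) :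
    ∃ μ : Set G → ℝ, μ Set.univ = 1 ∧ (∀ S, 0 ≤ μ S) ∧
      (∀ S T, Disjoint S T → μ (S ∪ T) = μ S + μ T) ∧
      ∀ (g : G) (S : Set G), μ {x | g * x ∈ S} = μ S := by
  obtain ⟨m, hadd, -, hpos, hone, hinv⟩ := h
  have hb : ∀ S : Set G, ∃ C, ∀ x, |S.indicator (fun _ => (1 : ℝ)) x| ≤ C := fun S =>
    ⟨1, fun x => by by_cases hx : x ∈ S <;> simp [hx]⟩
  refine ⟨fun S => m (S.indicator fun _ => 1), ?_, fun S => ?_, fun S T hST => ?_, fun g S => ?_⟩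
  · simpa using hone
  · exact hpos _ (hb S) fun x => Set.indicator_nonneg (fun _ _ => zero_le_one) x
  · show m _ = m _ + m _
    rw [← hadd _ _ (hb S) (hb T), Set.indicator_union_of_disjoint hST]
    rfl
  · exact hinv g _ (hb S)

variable {μ : Set G → ℝ}

lemma measure_mono (hpos : ∀ S, 0 ≤ μ S)
    (hadd : ∀ S T, Disjoint S T → μ (S ∪ T) = μ S + μ T) {S T : Set G} (h : S ⊆ T) :
    μ S ≤ μ T := by
  have h1 := hadd S (T \ S) Set.disjoint_sdiff_right
  rw [Set.union_sdiff_cancel h] at h1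
  linarith [hpos (T \ S)]

lemma measure_union_le (hpos : ∀ S, 0 ≤ μ S)
    (hadd : ∀ S T, Disjoint S T → μ (S ∪ T) = μ S + μ T) (S T : Set G) :
    μ (S ∪ T) ≤ μ S + μ T := by
  have h1 := hadd S (T \ S) Set.disjoint_sdiff_right
  rw [Set.union_sdiff_self] at h1
  linarith [measure_mono hpos hadd (Set.sdiff_subset : T \ S ⊆ T)]

end Mean

/-! ### The dynamics of a normal subgroup -/

section Normal

variable {A : Type*} [TopologicalSpace A] [Finite A]

/-- A normal subgroup which is not made of powers of the shift contains an element fixing the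
constant configuration `o` which is not a power of the shift. If `n` moves that configuration,
its commutator with a marker involution will do. -/
lemma exists_fixing [DiscreteTopology A] (o a : A) (ha : a ≠ o) (N : Subgroup (ShiftAut A)) (hN : N.Normal)
    (n : ShiftAut A) (hnN : n ∈ N) (hn : n.1 ∉ Subgroup.zpowers (shiftHomeo A)) :
    ∃ n' ∈ N, n'.1 (fun _ => o) = (fun _ => o) ∧ n'.1 ∉ Subgroup.zpowers (shiftHomeo A) := by
  by_cases hno : n.1 (fun _ => o) = fun _ => o
  · exact ⟨n, hnN, hno, hn⟩
  obtain ⟨b, hb⟩ := aut_const n o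
  have hbo : b ≠ o := by
    rintro rfl
    exact hno hb
  obtain ⟨r, hr0, hr⟩ := exists_radius n
  let B : Set A := {c | c ≠ o}
  let w : ℤ → A := fun j => if j = 0 then a else o
  have hw0 : w 0 ≠ o := by simpa [w] using ha
  have hw1 : w 1 ∉ B := by simp [w, B]
  -- `L` exceeds the length of the window in which `n x` below can differ from `b`.
  have hL : (2 : ℤ) ≤ 2 * r + 3 := by omega
  let h : ShiftAut A := flipAut (L := 2 * r + 3) hw0 hw1 le_rfl hL
  have hhapp : ∀ z, h.1 z = flip o B w 2 (2 * r + 3) z := fun _ => rfl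
  have hhinv : ∀ z, (h⁻¹).1 z = flip o B w 2 (2 * r + 3) z := fun _ => rfl
  refine ⟨n * (h * n⁻¹ * h⁻¹), N.mul_mem hnN (hN.conj_mem _ (N.inv_mem hnN) h), ?_, ?_⟩
  · obtain ⟨c, hc⟩ := aut_const n⁻¹ o
    show n.1 (h.1 ((n⁻¹).1 ((h⁻¹).1 _))) = _
    rw [hhinv, flip_const (by omega), hc, hhapp, flip_const (by omega), ← hc, aut_apply_inv_self]
  · rintro ⟨k, hk⟩
    let x : ℤ → A := fun j => if j = 0 ∨ j = 1 then a else o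
    have hxl : Lead o x 0 :=
      ⟨by simpa [x] using ha, fun i hi => if_neg (by omega)⟩
    have hxfix : flip o B w 2 (2 * r + 3) (n.1 x) = n.1 x := by
      refine funext fun i => flip_of_not fun q _ _ hq => ?_
      have hfar : ∀ t, t < -r ∨ 1 + r < t → n.1 x t = b := by
        intro t ht
        rw [hr x (fun _ => o) t fun i _ _ => if_neg (by omega), hb]
      -- One of the two ends of the long run of `o` lies outside the window `[-r, r + 1]`.
      have h1 := hq.2.2.1 (q - (2 * r + 3) - 2) le_rfl (by omega)
      have h2 := hq.2.2.1 (q - 3) (by omega) (by omega)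
      by_cases hc : q - 3 ≤ 1 + r
      · exact hbo ((hfar _ (Or.inl (by omega))).symm.trans h1)
      · exact hbo ((hfar _ (Or.inr (by omega))).symm.trans h2)
    have h1 : (shiftHomeo A ^ k) (n.1 x) = n.1 (h.1 ((n⁻¹).1 ((h⁻¹).1 (n.1 x)))) :=
      congrArg (fun f : (ℤ → A) ≃ₜ (ℤ → A) => f (n.1 x)) hk
    rw [shift_zpow_apply, hhinv, hxfix, aut_inv_apply_self, ← aut_sh] at h1
    have h2 : sh k x = flip o B w 2 (2 * r + 3) x := n.1.injective h1
    have h3 : flip o B w 2 (2 * r + 3) x ∈ Cyl o w 2 :=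
      flip_second hw0 hw1 le_rfl hL ⟨0, hxl, by simpa [x, B] using ha⟩
    rw [← h2] at h3
    obtain ⟨p, hp, hpw⟩ := h3
    have hpe := hp.unique (hxl.sh k)
    have h4 := hpw 1 (by omega) (by omega)
    simp [sh, x, w, hpe, ha] at h4

/-- The stabilizer in `N` of the constant configuration `o` has positive measure, because finitely
many of its translates cover `N`. -/
lemma stabilizer_pos (o : A) (N : Subgroup (ShiftAut A)) {μ : Set N → ℝ}
    (huniv : μ Set.univ = 1) (hpos : ∀ S, 0 ≤ μ S)
    (hadd : ∀ S T, Disjoint S T → μ (S ∪ T) = μ S + μ T)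
    (hinv : ∀ (g : N) (S : Set N), μ {x | g * x ∈ S} = μ S) :
    0 < μ {g | g.1.1 (fun _ => o) = fun _ => o} := by
  by_contra hcon
  have h0 : μ {g | g.1.1 (fun _ => o) = fun _ => o} = 0 := le_antisymm (not_lt.1 hcon) (hpos _)
  have hempty : μ ∅ = 0 := by
    have := hadd ∅ ∅ (Set.disjoint_empty _)
    rw [Set.union_self] at this
    linarith
  have hb : ∀ b : A, μ {g | g.1.1 (fun _ => o) = fun _ => b} = 0 := by
    intro b
    by_cases hne : ∃ n : N, n.1.1 (fun _ => o) = fun _ => b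
    · obtain ⟨n, hn⟩ := hne
      rw [← hinv n, ← h0]
      congr 1
      ext g
      show n.1.1 (g.1.1 _) = _ ↔ g.1.1 _ = _
      rw [← hn]
      exact n.1.1.injective.eq_iff
    · rw [← hempty]
      congr 1
      ext g
      exact ⟨fun h => hne ⟨g, h⟩, fun h => h.elim⟩
  have := Fintype.ofFinite A
  have hfin : ∀ s : Finset A, μ {g | ∃ b ∈ s, g.1.1 (fun _ => o) = fun _ => b} = 0 := by
    classical
    intro s
    induction s using Finset.induction_on with
    | empty => simpa using hempty
    | insert b s _ ih =>
      refine le_antisymm ?_ (hpos _)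
      have h1 := measure_union_le hpos hadd {g : N | g.1.1 (fun _ => o) = fun _ => b}
        {g | ∃ b ∈ s, g.1.1 (fun _ => o) = fun _ => b}
      rw [hb, ih, add_zero] at h1
      refine le_trans (measure_mono hpos hadd ?_) h1
      rintro g ⟨c, hc, hgc⟩
      rcases Finset.mem_insert.1 hc with rfl | hc
      · exact Or.inl hgc
      · exact Or.inr ⟨c, hc, hgc⟩
  have h1 : {g : N | ∃ b ∈ Finset.univ, g.1.1 (fun _ => o) = fun _ => b} = Set.univ := by
    ext g
    obtain ⟨b, hb⟩ := aut_const g.1 o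
    exact ⟨fun _ => trivial, fun _ => ⟨b, Finset.mem_univ b, hb⟩⟩
  have h2 := hfin Finset.univ
  rw [h1, huniv] at h2
  exact one_ne_zero h2

/-- A normal amenable subgroup cannot contain an element fixing the constant configuration `o`
which is not a power of the shift. -/
lemma no_fixing [DiscreteTopology A] (o a : A) (ha : a ≠ o) (N : Subgroup (ShiftAut A)) (hN : N.Normal)
    (hNa : IsAmenable N) (n : ShiftAut A) (hnN : n ∈ N)
    (hno : n.1 (fun _ => o) = fun _ => o) : n.1 ∈ Subgroup.zpowers (shiftHomeo A) := by
  by_contra hn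
  obtain ⟨μ, huniv, hpos, hadd, hinv⟩ := exists_measure hNa
  obtain ⟨y, hy0, hya, hya1, hy⟩ := exists_transitive o a ha
  obtain ⟨ℓ, hℓ, hmove⟩ := exists_moved_cyl hy0 hy n hno hn
  -- The push-forward of `μ` under the orbit map of `y`, and the mass of `Tail o`.
  let ν : Set (ℤ → A) → ℝ := fun E => μ {g | g.1.1 y ∈ E}
  have νmono : ∀ {E F : Set (ℤ → A)}, E ⊆ F → ν E ≤ ν F := fun h =>
    measure_mono hpos hadd fun g hg => h hg
  have νadd : ∀ {E F : Set (ℤ → A)}, Disjoint E F → ν (E ∪ F) = ν E + ν F := fun h =>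
    hadd _ _ (Set.disjoint_left.2 fun g h1 h2 => Set.disjoint_left.1 h h1 h2)
  have νle : ∀ E F : Set (ℤ → A), ν (E ∪ F) ≤ ν E + ν F := fun E F =>
    measure_union_le hpos hadd _ _
  have hc : 0 < ν (Tail o) := by
    refine lt_of_lt_of_le (stabilizer_pos o N huniv hpos hadd hinv) (measure_mono hpos hadd ?_)
    exact fun g hg => aut_tail g.1 hg ⟨0, hy0⟩
  -- Every translate of the cylinder has at most half of the mass, being moved off itself by a
  -- conjugate of `n`.
  have hhalf : ∀ k : ShiftAut A, k.1 (fun _ => o) = (fun _ => o) →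
      2 * ν {x | k.1 x ∈ Cyl o y ℓ} ≤ ν (Tail o) := by
    intro k hk
    let n' : N := ⟨k⁻¹ * n * k, by simpa using hN.conj_mem n hnN k⁻¹⟩
    have hk' : (k⁻¹).1 (fun _ => o) = fun _ => o := by
      conv_lhs => rw [← hk]
      exact aut_inv_apply_self k _
    have hkn : ∀ z, k.1 (n'.1.1 z) = n.1 (k.1 z) := fun z => aut_apply_inv_self k _
    have h1 : ν {x | n'.1.1 x ∈ {x | k.1 x ∈ Cyl o y ℓ}} = ν {x | k.1 x ∈ Cyl o y ℓ} :=
      hinv n' {g | g.1.1 y ∈ {x | k.1 x ∈ Cyl o y ℓ}}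
    have htail : ∀ z, k.1 z ∈ Tail o → z ∈ Tail o := fun z hz => by
      have := aut_tail k⁻¹ hk' hz
      rwa [aut_inv_apply_self] at this
    have hn' : (n⁻¹).1 (fun _ => o) = fun _ => o := by
      conv_lhs => rw [← hno]
      exact aut_inv_apply_self n _
    have h2 : ν ({x | k.1 x ∈ Cyl o y ℓ} ∪ {x | n'.1.1 x ∈ {x | k.1 x ∈ Cyl o y ℓ}})
        ≤ ν (Tail o) := by
      refine νmono ?_
      rintro x (⟨p, hp, -⟩ | hx)
      · exact htail x ⟨p, hp⟩
      · have hx' : k.1 (n'.1.1 x) ∈ Cyl o y ℓ := hx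
        rw [hkn] at hx'
        obtain ⟨p, hp, -⟩ := hx'
        have := aut_tail n⁻¹ hn' ⟨p, hp⟩
        rw [aut_inv_apply_self] at this
        exact htail x this
    rw [νadd, h1] at h2
    · linarith
    · refine Set.disjoint_left.2 fun x hx hx' => hmove _ hx ?_
      have hx2 : k.1 (n'.1.1 x) ∈ Cyl o y ℓ := hx'
      rwa [hkn] at hx2
  -- `f` maps the complement of `V` in `Tail o` into the cylinder.
  let V := Second o {c | c ≠ o}
  have hf0 : y 0 ≠ o := hya ▸ ha
  have hf1 : y 1 ∉ ({o} : Set A) := by simpa [hya1] using ha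
  let f : ShiftAut A := flipAut hf0 hf1 hℓ le_rfl
  have hfo : f.1 (fun _ => o) = fun _ => o := flip_const (by omega) o
  -- Hence every translate of `V` has at least half of the mass.
  have hV : ∀ h : ShiftAut A, h.1 (fun _ => o) = (fun _ => o) →
      ν (Tail o) ≤ 2 * ν {x | h.1 x ∈ V} := by
    intro h hh
    have h1 := hhalf (f * h) (by show f.1 (h.1 _) = _; rw [hh, hfo])
    have h2 : Tail o ⊆ {x | h.1 x ∈ V} ∪ {x | (f * h).1 x ∈ Cyl o y ℓ} := by
      intro x hx
      obtain ⟨p, hp⟩ := aut_tail h hh hx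
      by_cases hp1 : h.1 x (p + 1) = o
      · exact Or.inr (flip_second hf0 hf1 hℓ le_rfl ⟨p, hp, hp1⟩)
      · exact Or.inl ⟨p, hp, hp1⟩
    linarith [νmono h2, νle {x | h.1 x ∈ V} {x | (f * h).1 x ∈ Cyl o y ℓ}]
  -- Two marker involutions map `V` into the disjoint cylinders of `a o o` and `a o a`.
  let w₁ : ℤ → A := fun j => if j = 0 then a else o
  let w₂ : ℤ → A := fun j => if j = 0 ∨ j = 2 then a else o
  have hw₁0 : w₁ 0 ≠ o := by simpa [w₁] using ha
  have hw₁1 : w₁ 1 ∉ {c | c ≠ o} := by simp [w₁]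
  have hw₂0 : w₂ 0 ≠ o := by simpa [w₂] using ha
  have hw₂1 : w₂ 1 ∉ {c | c ≠ o} := by simp [w₂]
  have h23 : (2 : ℤ) ≤ 3 := by norm_num
  let h₁ : ShiftAut A := flipAut (ℓ := 3) (L := 3) hw₁0 hw₁1 h23 le_rfl
  let h₂ : ShiftAut A := flipAut (ℓ := 3) (L := 3) hw₂0 hw₂1 h23 le_rfl
  have hV₁ : ∀ x, h₁.1 x ∈ V → x ∈ Cyl o w₁ 3 := fun x hx => by
    have h1 := flip_second (L := 3) hw₁0 hw₁1 h23 le_rfl hx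
    have h2 : flip o {c | c ≠ o} w₁ 3 3 (h₁.1 x) = x := flip_flip hw₁0 hw₁1 h23 le_rfl x
    rwa [h2] at h1
  have hV₂ : ∀ x, h₂.1 x ∈ V → x ∈ Cyl o w₂ 3 := fun x hx => by
    have h1 := flip_second (L := 3) hw₂0 hw₂1 h23 le_rfl hx
    have h2 : flip o {c | c ≠ o} w₂ 3 3 (h₂.1 x) = x := flip_flip hw₂0 hw₂1 h23 le_rfl x
    rwa [h2] at h1
  have m0 : ν (Tail o) ≤ 2 * ν V := hV 1 rfl
  have m1 := hV h₁ (flip_const (by omega) o)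
  have m2 := hV h₂ (flip_const (by omega) o)
  have d1 : Disjoint {x | h₁.1 x ∈ V} {x | h₂.1 x ∈ V} := by
    refine Set.disjoint_left.2 fun x hx hx' => ?_
    obtain ⟨p, hp, hpw⟩ := hV₁ x hx
    obtain ⟨p', hp', hpw'⟩ := hV₂ x hx'
    obtain rfl := hp.unique hp'
    have e := (hpw 2 (by omega) (by omega)).symm.trans (hpw' 2 (by omega) (by omega))
    simp only [w₁, w₂] at e
    exact ha (by simpa using e.symm)
  have d2 : Disjoint V ({x | h₁.1 x ∈ V} ∪ {x | h₂.1 x ∈ V}) := by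
    refine Set.disjoint_left.2 ?_
    rintro x ⟨p, hp, hpB⟩ (hx | hx)
    · obtain ⟨p', hp', hpw⟩ := hV₁ x hx
      obtain rfl := hp.unique hp'
      exact hw₁1 (hpw 1 (by omega) (by omega) ▸ hpB)
    · obtain ⟨p', hp', hpw⟩ := hV₂ x hx
      obtain rfl := hp.unique hp'
      exact hw₂1 (hpw 1 (by omega) (by omega) ▸ hpB)
  have htot : ν (V ∪ ({x | h₁.1 x ∈ V} ∪ {x | h₂.1 x ∈ V})) ≤ ν (Tail o) := by
    refine νmono ?_
    rintro x (⟨p, hp, -⟩ | hx | hx)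
    · exact ⟨p, hp⟩
    · obtain ⟨p, hp, -⟩ := hV₁ x hx
      exact ⟨p, hp⟩
    · obtain ⟨p, hp, -⟩ := hV₂ x hx
      exact ⟨p, hp⟩
  rw [νadd d2, νadd d1] at htot
  linarith

end Normal

end FullShift

/-- Every normal amenable subgroup of `Aut(A^ℤ)` is contained in `Σ(A^ℤ)`,
the subgroup consisting of the powers of the shift `σ`. -/
theorem normal_amenable_le_shifts
    (A : Type*) [Fintype A] [TopologicalSpace A] [DiscreteTopology A]
    (hA : 2 ≤ Fintype.card A)
    (N : Subgroup (ShiftAut A)) (hN : N.Normal) (hNa : IsAmenable N) :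
    ∀ g ∈ N, ((g : ShiftAut A) : (ℤ → A) ≃ₜ (ℤ → A)) ∈ Subgroup.zpowers (shiftHomeo A) := by
  intro g hg
  obtain ⟨a, o, ha⟩ := Fintype.one_lt_card_iff.1 (show 1 < Fintype.card A by omega)
  by_contra hng
  obtain ⟨n, hnN, hno, hn⟩ := FullShift.exists_fixing o a ha N hN g hg hng
  exact hn (FullShift.no_fixing o a ha N hN hNa n hnN hno)
end

section
/- Let A be a finite alphabet with |A| ≥ 2. The center of Aut(A^ℤ) is equal to Σ(A^ℤ), the subgroup consisting of the powers of the shift σ (Ryan's Theorem). -/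
section Ryan

variable {A : Type*}

/-! ### Contexts and the involution exchanging two letters in them -/

/-- `Ctx w N i x` says that `x` agrees around `i` with `w` around `0`, up to distance `N`, except
possibly at the central position. -/
def Ctx (w : ℤ → A) (N : ℤ) (i : ℤ) (x : ℤ → A) : Prop :=
  ∀ s ∈ (Finset.Icc (-N) N).erase 0, x (i + s) = w s

lemma Ctx.apply {w : ℤ → A} {N i : ℤ} {x : ℤ → A} (h : Ctx w N i x) {s : ℤ} (h0 : s ≠ 0)
    (h1 : -N ≤ s) (h2 : s ≤ N) : x (i + s) = w s :=
  h s (by simp [h0, h1, h2])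

/-- Contexts do not overlap: for shifts `s ≥ 2` the letter `b` at `1` meets a letter `a` on the
negative side, and for `s = 1` the letters at `1` and `2` meet. -/
lemma Ctx.unique {a b : A} (hab : a ≠ b) {w : ℤ → A} {N : ℤ} (hN : 2 ≤ N)
    (hneg : ∀ j ≤ 0, w j = a) (h1 : w 1 = b) (h2 : w 2 = a)
    {i j : ℤ} {x : ℤ → A} (hi : Ctx w N i x) (hj : Ctx w N j x) (hlt : i < j)
    (hle : j ≤ i + N) : False := by
  by_cases h : j = i + 1
  · subst h
    have e1 := hi.apply (s := 2) (by omega) (by omega) (by omega)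
    have e2 := hj.apply (s := 1) (by omega) (by omega) (by omega)
    rw [show i + 1 + 1 = i + 2 by ring, e1, h1, h2] at e2
    exact hab e2
  · have e1 := hi.apply (s := 1) (by omega) (by omega) (by omega)
    have e2 := hj.apply (s := i + 1 - j) (by omega) (by omega) (by omega)
    rw [show j + (i + 1 - j) = i + 1 by ring, e1, h1, hneg _ (by omega)] at e2
    exact hab e2.symm

open Classical in
/-- Exchange `a` and `b` at the centre of every context. -/
noncomputable def flipCtx (a b : A) (w : ℤ → A) (N : ℤ) (x : ℤ → A) : ℤ → A := fun i =>
  if Ctx w N i x then Equiv.swap a b (x i) else x i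

lemma flipCtx_of_not {a b : A} {w : ℤ → A} {N : ℤ} {x : ℤ → A} {i : ℤ} (h : ¬ Ctx w N i x) :
    flipCtx a b w N x i = x i := by
  simp [flipCtx, h]

open Classical in
lemma flipCtx_of_ctx {a b : A} {w : ℤ → A} {N : ℤ} {x : ℤ → A} {i : ℤ} (h : Ctx w N i x) :
    flipCtx a b w N x i = Equiv.swap a b (x i) := by
  simp [flipCtx, h]

section

variable {a b : A} {w : ℤ → A} {N : ℤ}

/-- `flipCtx` preserves contexts, as it never changes the non-central letters of one. -/
lemma Ctx.map_flipCtx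
    (hU : ∀ i j x, Ctx w N i x → Ctx w N j x → i < j → j ≤ i + N → False)
    {x : ℤ → A} {i : ℤ} (h : Ctx w N i x) : Ctx w N i (flipCtx a b w N x) := by
  intro s hs
  rw [flipCtx_of_not, h s hs]
  intro h'
  simp only [Finset.mem_erase, Finset.mem_Icc] at hs
  rcases lt_or_gt_of_ne hs.1 with h0 | h0
  · exact hU _ _ _ h' h (by omega) (by omega)
  · exact hU _ _ _ h h' (by omega) (by omega)

lemma Ctx.of_flipCtx
    (hU : ∀ i j x, Ctx w N i x → Ctx w N j x → i < j → j ≤ i + N → False)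
    {x : ℤ → A} {i : ℤ} (h : Ctx w N i (flipCtx a b w N x)) : Ctx w N i x := by
  intro s hs
  rw [← h s hs, flipCtx_of_not]
  intro h'
  replace h' := h'.map_flipCtx (a := a) (b := b) hU
  simp only [Finset.mem_erase, Finset.mem_Icc] at hs
  rcases lt_or_gt_of_ne hs.1 with h0 | h0
  · exact hU _ _ _ h' h (by omega) (by omega)
  · exact hU _ _ _ h h' (by omega) (by omega)

lemma flipCtx_flipCtx
    (hU : ∀ i j x, Ctx w N i x → Ctx w N j x → i < j → j ≤ i + N → False)
    (x : ℤ → A) : flipCtx a b w N (flipCtx a b w N x) = x := by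
  classical
  funext i
  by_cases h : Ctx w N i x
  · rw [flipCtx_of_ctx (h.map_flipCtx hU), flipCtx_of_ctx h, Equiv.swap_apply_self]
  · rw [flipCtx_of_not (fun h' => h (h'.of_flipCtx hU)), flipCtx_of_not h]

lemma continuous_flipCtx [TopologicalSpace A] [DiscreteTopology A] :
    Continuous (flipCtx a b w N) := by
  classical
  refine continuous_pi fun i => ?_
  have hcl : IsClopen {x : ℤ → A | Ctx w N i x} := by
    have : {x : ℤ → A | Ctx w N i x} =
        ⋂ s ∈ (Finset.Icc (-N) N).erase 0, (fun x : ℤ → A => x (i + s)) ⁻¹' {w s} := by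
      ext x; simp only [Ctx, Set.mem_ofPred_eq, Set.mem_iInter, Set.mem_preimage,
        Set.mem_singleton_iff]
    rw [this]
    exact isClopen_biInter_finset fun s _ =>
      (isClopen_discrete {w s}).preimage (continuous_apply (i + s))
  refine Continuous.if ?_ ?_ (continuous_apply i)
  · intro x hx
    rw [hcl.frontier_eq] at hx
    exact hx.elim
  · exact continuous_of_discreteTopology.comp (continuous_apply i)

/-- `flipCtx` as an involutive homeomorphism. -/
noncomputable def flipHomeo [TopologicalSpace A] [DiscreteTopology A] (a b : A)
    (hU : ∀ i j x, Ctx w N i x → Ctx w N j x → i < j → j ≤ i + N → False) :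
    (ℤ → A) ≃ₜ (ℤ → A) where
  toFun := flipCtx a b w N
  invFun := flipCtx a b w N
  left_inv := flipCtx_flipCtx hU
  right_inv := flipCtx_flipCtx hU
  continuous_toFun := continuous_flipCtx
  continuous_invFun := continuous_flipCtx

end

/-! ### Automorphisms as sliding block codes -/

lemma mem_shiftAut_iff [TopologicalSpace A] (φ : (ℤ → A) ≃ₜ (ℤ → A)) :
    φ ∈ ShiftAut A ↔ ∀ x, φ (fun m => x (m + 1)) = fun m => φ x (m + 1) := by
  rw [ShiftAut, Subgroup.mem_centralizer_singleton_iff]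
  constructor
  · intro h x
    exact DFunLike.congr_fun h x
  · intro h
    exact Homeomorph.ext h

lemma flipHomeo_mem [TopologicalSpace A] [DiscreteTopology A] (a b : A) {w : ℤ → A} {N : ℤ}
    (hU : ∀ i j x, Ctx w N i x → Ctx w N j x → i < j → j ≤ i + N → False) :
    flipHomeo a b hU ∈ ShiftAut A := by
  rw [mem_shiftAut_iff]
  intro x
  funext i
  have : Ctx w N i (fun m => x (m + 1)) ↔ Ctx w N (i + 1) x := by
    simp only [Ctx, add_right_comm]
  change flipCtx a b w N _ i = flipCtx a b w N x (i + 1)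
  by_cases h : Ctx w N (i + 1) x
  · rw [flipCtx_of_ctx h, flipCtx_of_ctx (this.2 h)]
  · rw [flipCtx_of_not h, flipCtx_of_not (fun h' => h (this.1 h'))]

lemma shift_zpow_apply [TopologicalSpace A] (n : ℤ) (x : ℤ → A) :
    (shiftHomeo A ^ n) x = fun m => x (m + n) := by
  induction n generalizing x with
  | zero => funext m; simp
  | succ n ih =>
    rw [zpow_add_one]
    change (shiftHomeo A ^ (n : ℤ)) (shiftHomeo A x) = _
    rw [ih]
    funext m
    change x (m + n + 1) = _
    rw [add_assoc]
  | pred n ih =>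
    rw [zpow_sub_one]
    change (shiftHomeo A ^ (-n : ℤ)) ((shiftHomeo A).symm x) = _
    rw [ih]
    funext m
    change x (m + -n - 1) = _
    congr 1; ring

lemma apply_translate [TopologicalSpace A] {φ : (ℤ → A) ≃ₜ (ℤ → A)} (h : φ ∈ ShiftAut A)
    (n : ℤ) (x : ℤ → A) : φ (fun m => x (m + n)) = fun m => φ x (m + n) := by
  rw [ShiftAut, Subgroup.mem_centralizer_singleton_iff] at h
  have h2 : φ * shiftHomeo A ^ n = shiftHomeo A ^ n * φ := Commute.zpow_right h n
  have h3 : φ ((shiftHomeo A ^ n) x) = (shiftHomeo A ^ n) (φ x) := DFunLike.congr_fun h2 x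
  rwa [shift_zpow_apply, shift_zpow_apply] at h3

/-- The Curtis–Hedlund–Lyndon theorem: an automorphism is a sliding block code. -/
lemma exists_radius [Finite A] [TopologicalSpace A] [DiscreteTopology A]
    {φ : (ℤ → A) ≃ₜ (ℤ → A)} (h : φ ∈ ShiftAut A) :
    ∃ r : ℕ, ∀ (x y : ℤ → A) (i i' : ℤ),
      (∀ j : ℤ, -r ≤ j → j ≤ r → x (i + j) = y (i' + j)) → φ x i = φ y i' := by
  obtain ⟨r, hr⟩ : ∃ r : ℕ, ∀ x y : ℤ → A,
      (∀ j : ℤ, -r ≤ j → j ≤ r → x j = y j) → φ x 0 = φ y 0 := by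
    by_contra! hcon
    -- pairs agreeing on `[-n, n]` whose images differ at `0` form a decreasing sequence of
    -- compact sets; a point of the intersection is a pair `(x, x)` with `φ x 0 ≠ φ x 0`
    let U : ℕ → Set ((ℤ → A) × (ℤ → A)) := fun n =>
      {p | (∀ j : ℤ, -n ≤ j → j ≤ n → p.1 j = p.2 j) ∧ φ p.1 0 ≠ φ p.2 0}
    have hclosed : ∀ n, IsClosed (U n) := by
      intro n
      have h1 : IsClosed {p : (ℤ → A) × (ℤ → A) |
          ∀ j : ℤ, -n ≤ j → j ≤ n → p.1 j = p.2 j} := by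
        simp only [Set.ofPred_forall]
        exact isClosed_iInter fun j => isClosed_iInter fun _ => isClosed_iInter fun _ =>
          isClosed_eq (by fun_prop) (by fun_prop)
      have h2 : IsClosed {p : (ℤ → A) × (ℤ → A) | φ p.1 0 ≠ φ p.2 0} := by
        have hc : Continuous fun p : (ℤ → A) × (ℤ → A) => (φ p.1 0, φ p.2 0) :=
          ((continuous_apply 0).comp (φ.continuous.comp continuous_fst)).prodMk
            ((continuous_apply 0).comp (φ.continuous.comp continuous_snd))
        exact (isClosed_discrete {q : A × A | q.1 ≠ q.2}).preimage hc
      exact h1.inter h2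
    obtain ⟨p, hp⟩ := IsCompact.nonempty_iInter_of_sequence_nonempty_isCompact_isClosed U
      (fun n p hp => ⟨fun j h1 h2 => hp.1 j (by push_cast; omega) (by push_cast; omega), hp.2⟩)
      (fun n => by
        obtain ⟨x, y, h1, h2⟩ := hcon n
        exact ⟨(x, y), h1, h2⟩)
      (hclosed 0).isCompact hclosed
    rw [Set.mem_iInter] at hp
    have he : p.1 = p.2 := funext fun j => (hp j.natAbs).1 j (by omega) (by omega)
    exact (hp 0).2 (by rw [he])
  refine ⟨r, fun x y i i' hxy => ?_⟩
  have := hr (fun m => x (m + i)) (fun m => y (m + i')) (fun j h1 h2 => by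
    simpa only [add_comm] using hxy j h1 h2)
  rw [apply_translate h, apply_translate h] at this
  simpa using this

/-! ### A point containing every short word -/

/-- The words of length `2r+1` are written one after another from position `3` on. -/
lemma exists_universal_point [Finite A] (a b : A) (r : ℕ) :
    ∃ (w : ℤ → A) (N : ℤ), 2 ≤ N ∧ (∀ j ≤ 0, w j = a) ∧ w 1 = b ∧ w 2 = a ∧
      ∀ (y : ℤ → A), ∃ p : ℤ, 3 + r ≤ p ∧ p + r ≤ N ∧
        ∀ j : ℤ, -r ≤ j → j ≤ r → w (p + j) = y j := by
  classical
  obtain ⟨K, ⟨e⟩⟩ := Finite.exists_equiv_fin (Fin (2 * r + 1) → A)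
  let L : ℤ := 2 * r + 1
  have hL : 0 < L := by omega
  let w : ℤ → A := fun j =>
    if j = 1 then b else
    if h : 3 ≤ j ∧ ((j - 3) / L).toNat < K ∧ ((j - 3) % L).toNat < 2 * r + 1 then
      e.symm ⟨((j - 3) / L).toNat, h.2.1⟩ ⟨((j - 3) % L).toNat, h.2.2⟩ else a
  have hLK : 0 ≤ L * K := by positivity
  refine ⟨w, 3 + L * K, by omega, ?_, ?_, ?_, ?_⟩
  · intro j hj
    simp only [w]
    rw [if_neg (by omega), dif_neg (by omega)]
  · simp [w]
  · simp [w]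
  · intro y
    let u : Fin (2 * r + 1) → A := fun q => y ((q : ℕ) - r)
    have hu := (e u).2
    set q : ℕ := (e u : ℕ) with hq
    have hqK : L * (q + 1) ≤ L * K := by
      apply mul_le_mul_of_nonneg_left _ hL.le
      exact_mod_cast hu
    have hq0 : 0 ≤ L * q := by positivity
    refine ⟨3 + L * q + r, by omega, by rw [mul_add] at hqK; omega, ?_⟩
    intro j h1 h2
    have hdiv : (3 + L * q + r + j - 3) / L = q := by
      rw [show 3 + L * q + r + j - 3 = (r + j) + L * q by ring,
        Int.add_mul_ediv_left _ _ hL.ne', Int.ediv_eq_zero_of_lt (by omega) (by omega), zero_add]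
    have hmod : (3 + L * q + r + j - 3) % L = r + j := by
      rw [show 3 + L * q + r + j - 3 = (r + j) + L * q by ring,
        Int.add_mul_emod_self_left, Int.emod_eq_of_lt (by omega) (by omega)]
    simp only [w]
    rw [if_neg (by omega), dif_pos ⟨by omega, by rw [hdiv]; omega, by rw [hmod]; omega⟩]
    simp only [hdiv, hmod, Int.toNat_natCast]
    have : (⟨q, hu⟩ : Fin K) = e u := rfl
    rw [this, Equiv.symm_apply_apply]
    simp only [u]
    congr 1
    omega

end Ryan

/-- Ryan's Theorem: the center of `Aut(A^ℤ)` is `Σ(A^ℤ)`, the subgroup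
consisting of the powers of the shift `σ`. -/
theorem center_eq_shifts
    (A : Type*) [Fintype A] [TopologicalSpace A] [DiscreteTopology A]
    (hA : 2 ≤ Fintype.card A) :
    Subgroup.center (ShiftAut A) =
      (Subgroup.zpowers (shiftHomeo A)).subgroupOf (ShiftAut A) := by
  ext ⟨φ, hφ⟩
  rw [Subgroup.mem_center_iff, Subgroup.mem_subgroupOf, Subgroup.mem_zpowers_iff]
  constructor
  · intro hc
    classical
    obtain ⟨a, b, hab⟩ := Fintype.one_lt_card_iff.1 (show 1 < Fintype.card A by omega)
    obtain ⟨r, hr⟩ := exists_radius hφ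
    obtain ⟨w, N, hN, hneg, h1, h2, hw⟩ := exists_universal_point a b r
    have hU : ∀ i j x, Ctx w N i x → Ctx w N j x → i < j → j ≤ i + N → False :=
      fun i j x => Ctx.unique hab hN hneg h1 h2
    have hcomm : flipCtx a b w N (φ w) = φ (flipCtx a b w N w) :=
      DFunLike.congr_fun (congrArg Subtype.val (hc ⟨flipHomeo a b hU, flipHomeo_mem a b hU⟩)) w
    have hne : flipCtx a b w N w ≠ w := by
      intro h
      have h0 := congrFun h 0
      rw [flipCtx_of_ctx (fun s _ => by rw [zero_add]), hneg 0 le_rfl, Equiv.swap_apply_left] at h0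
      exact hab h0.symm
    obtain ⟨m, hm⟩ : ∃ m, φ (flipCtx a b w N w) m ≠ φ w m := by
      by_contra! h
      exact hne (φ.injective (funext h))
    have hctx : Ctx w N m (φ w) := by
      by_contra h
      exact hm (by rw [← hcomm, flipCtx_of_not h])
    obtain ⟨k, hk1, hk2, hk⟩ : ∃ k : ℤ, -r ≤ k ∧ k ≤ r ∧ Ctx w N (m - k) w := by
      by_contra! h
      refine hm (hr _ _ _ _ fun j hj1 hj2 => flipCtx_of_not ?_)
      have := h (-j) (by omega) (by omega)
      rwa [sub_neg_eq_add] at this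
    refine ⟨-k, Homeomorph.ext fun y => ?_⟩
    rw [shift_zpow_apply]
    funext t
    obtain ⟨p, hp1, hp2, hp⟩ := hw (fun j => y (t + j))
    -- the word of `y` around `t` occurs in `w` around `m - k + p`
    have e1 : φ w (m - k + p) = φ y t := hr _ _ _ _ fun j hj1 hj2 => by
      rw [add_assoc, hk.apply (by omega) (by omega) (by omega), hp j hj1 hj2]
    rw [← e1, show m - k + p = m + (p - k) by ring,
      hctx.apply (by omega) (by omega) (by omega), sub_eq_add_neg,
      hp (-k) (by omega) (by omega)]
  · rintro ⟨n, hn⟩ ⟨ψ, hψ⟩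
    apply Subtype.ext
    change ψ * φ = φ * ψ
    change _ = φ at hn
    rw [← hn]
    exact Commute.zpow_right (Subgroup.mem_centralizer_singleton_iff.1 hψ) n
end

section
/- Let A be a finite alphabet with |A| ≥ 2 and let d ≥ 1. The center of Aut(A^{ℤ^d}) is equal to Σ(A^{ℤ^d}), the group of shifts. -/
/-- The shift `σ_v`, `(σ_v x) u = x (u + v)`, on `A^{ℤ^d}`, as a homeomorphism. -/
def shiftD (d : ℕ) (A : Type*) [TopologicalSpace A] (v : Fin d → ℤ) :
    ((Fin d → ℤ) → A) ≃ₜ ((Fin d → ℤ) → A) where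
  toFun x := fun u => x (u + v)
  invFun x := fun u => x (u - v)
  left_inv x := funext fun u => by simp
  right_inv x := funext fun u => by simp
  continuous_toFun := continuous_pi fun u => continuous_apply (u + v)
  continuous_invFun := continuous_pi fun u => continuous_apply (u - v)

/-- `Aut(A^{ℤ^d})`: the group of homeomorphisms of `A^{ℤ^d}` commuting with all shifts. -/
def ShiftAutD (d : ℕ) (A : Type*) [TopologicalSpace A] :
    Subgroup (((Fin d → ℤ) → A) ≃ₜ ((Fin d → ℤ) → A)) :=
  Subgroup.centralizer (Set.range (shiftD d A))

/-! ### Finite memory of continuous maps -/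

open Classical in
/-- A continuous map `A^G → A` is determined by finitely many coordinates. -/
theorem exists_memory {G A : Type*} [Finite A] [TopologicalSpace A] [DiscreteTopology A]
    (F : (G → A) → A) (hF : Continuous F) :
    ∃ M : Finset G, ∀ x y : G → A, (∀ m ∈ M, x m = y m) → F x = F y := by
  have key : ∀ x : G → A, ∃ I : Finset G, ∀ y : G → A, (∀ m ∈ I, y m = x m) → F y = F x := by
    intro x
    have ho : IsOpen (F ⁻¹' {F x}) := (isOpen_discrete _).preimage hF
    obtain ⟨I, u, hu, hsub⟩ := isOpen_pi_iff.1 ho x rfl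
    refine ⟨I, fun y hy => ?_⟩
    have : y ∈ F ⁻¹' {F x} := hsub fun m hm => by
      rw [hy m hm]; exact (hu m hm).2
    exact this
  choose I hI using key
  obtain ⟨t, -, ht⟩ := (isCompact_univ (X := G → A)).elim_nhds_subcover
    (fun x => {y | ∀ m ∈ I x, y m = x m}) (fun x _ => by
      have : {y : G → A | ∀ m ∈ I x, y m = x m} = (I x : Set G).pi fun m => {x m} := by
        ext y; simp [Set.mem_pi]
      rw [this]
      exact (isOpen_set_pi (I x).finite_toSet fun _ _ => isOpen_discrete _).mem_nhds
        (by simp [Set.mem_pi]))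
  refine ⟨t.biUnion I, fun x y hxy => ?_⟩
  obtain ⟨z, hz, hxz⟩ := Set.mem_iUnion₂.1 (ht (Set.mem_univ x))
  have hyz : ∀ m ∈ I z, y m = z m := fun m hm => by
    rw [← hxy m (Finset.mem_biUnion.2 ⟨z, hz, hm⟩)]; exact hxz m hm
  rw [hI z x hxz, hI z y hyz]

/-! ### Conditional swaps -/

/-- The pattern with symbol `val i` at site `pos i` occurs in `x` at `u`. -/
def Occurs {G A ι : Type*} [Add G] (pos : ι → G) (val : ι → A) (x : G → A) (u : G) : Prop :=
  ∀ i, x (u + pos i) = val i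

open Classical in
/-- Exchange `a` and `b` at every site where the pattern occurs. -/
noncomputable def markerFun {G A ι : Type*} [Add G] (pos : ι → G) (val : ι → A) (a b : A)
    (x : G → A) (u : G) : A :=
  if Occurs pos val x u then Equiv.swap a b (x u) else x u

/-- No two occurrences of the pattern are displaced by an element `pos i` of its support: the two
copies would prescribe distinct symbols at a common site. -/
def NonOverlap {G A ι : Type*} [Add G] (pos : ι → G) (val : ι → A) : Prop :=
  ∀ i, ∃ i₁ i₂, pos i₂ = pos i + pos i₁ ∧ val i₂ ≠ val i₁

section Marker

variable {G A ι : Type*} [AddCommGroup G] {pos : ι → G} {val : ι → A} {a b : A}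

theorem NonOverlap.not_occurs (h : NonOverlap pos val) {x : G → A} {u : G}
    (hu : Occurs pos val x u) (i : ι) : ¬ Occurs pos val x (u + pos i) := by
  intro hi
  obtain ⟨i₁, i₂, h₁, h₂⟩ := h i
  apply h₂
  rw [← hu i₂, ← hi i₁, h₁, add_assoc]

theorem markerFun_of_not {x : G → A} {u : G} (hu : ¬ Occurs pos val x u) :
    markerFun pos val a b x u = x u := by
  simp [markerFun, hu]

theorem occurs_of_markerFun_ne {x : G → A} {u : G} (hu : markerFun pos val a b x u ≠ x u) :
    Occurs pos val x u := by
  by_contra h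
  exact hu (markerFun_of_not h)

theorem NonOverlap.occurs_markerFun (h : NonOverlap pos val) (x : G → A) (u : G) :
    Occurs pos val (markerFun pos val a b x) u ↔ Occurs pos val x u := by
  have fwd : ∀ v, Occurs pos val x v → Occurs pos val (markerFun pos val a b x) v := by
    intro v hv i
    rw [markerFun_of_not (h.not_occurs hv i), hv i]
  refine ⟨fun hu => ?_, fwd u⟩
  by_contra hx
  obtain ⟨i, hi⟩ := not_forall.1 hx
  -- The symbol at `u + pos i` was changed, so both `u` and `u + pos i` are occurrences after it.
  have hi' : Occurs pos val x (u + pos i) :=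
    occurs_of_markerFun_ne (a := a) (b := b) fun heq => hi (by rw [← heq, hu i])
  exact h.not_occurs hu i (fwd _ hi')

theorem NonOverlap.markerFun_involutive (h : NonOverlap pos val) :
    Function.Involutive (markerFun pos val a b) := by
  classical
  intro x
  funext u
  by_cases hu : Occurs pos val x u
  · have hu' := (h.occurs_markerFun (a := a) (b := b) x u).2 hu
    rw [markerFun, if_pos hu', markerFun, if_pos hu, Equiv.swap_apply_self]
  · rw [markerFun_of_not (mt (h.occurs_markerFun x u).1 hu), markerFun_of_not hu]

theorem continuous_markerFun [Finite ι] [TopologicalSpace A] [DiscreteTopology A] :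
    Continuous (markerFun pos val a b) := by
  classical
  refine continuous_pi fun u => ?_
  have hc : IsClopen {x : G → A | Occurs pos val x u} := by
    have : {x : G → A | Occurs pos val x u} = ⋂ i, (fun x : G → A => x (u + pos i)) ⁻¹' {val i} := by
      ext x; simp [Occurs]
    rw [this]
    exact isClopen_iInter_of_finite fun i => (isClopen_discrete _).preimage (continuous_apply _)
  unfold markerFun
  refine Continuous.if (fun x hx => ?_) (continuous_of_discreteTopology.comp (continuous_apply u))
    (continuous_apply u)
  rw [hc.frontier_eq] at hx
  exact hx.elim

/-- The conditional swap as a homeomorphism. -/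
noncomputable def markerAut [Finite ι] [TopologicalSpace A] [DiscreteTopology A]
    (h : NonOverlap pos val) (a b : A) : (G → A) ≃ₜ (G → A) where
  toFun := markerFun pos val a b
  invFun := markerFun pos val a b
  left_inv := h.markerFun_involutive
  right_inv := h.markerFun_involutive
  continuous_toFun := continuous_markerFun
  continuous_invFun := continuous_markerFun

end Marker

theorem mem_shiftAutD {d : ℕ} {A : Type*} [TopologicalSpace A]
    {f : ((Fin d → ℤ) → A) ≃ₜ ((Fin d → ℤ) → A)} :
    f ∈ ShiftAutD d A ↔ ∀ v x u, f (fun w => x (w + v)) u = f x (u + v) := by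
  rw [ShiftAutD, Subgroup.mem_centralizer_iff]
  constructor
  · intro h v x u
    have := h (shiftD d A v) ⟨v, rfl⟩
    exact (congrFun (DFunLike.congr_fun this x) u).symm
  · rintro h _ ⟨v, rfl⟩
    refine Homeomorph.ext fun x => funext fun u => ?_
    exact (h v x u).symm

theorem markerAut_mem {d : ℕ} {A ι : Type*} [Finite ι] [TopologicalSpace A] [DiscreteTopology A]
    {pos : ι → Fin d → ℤ} {val : ι → A} (h : NonOverlap pos val) (a b : A) :
    markerAut h a b ∈ ShiftAutD d A := by
  rw [mem_shiftAutD]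
  intro v x u
  have : Occurs pos val (fun w => x (w + v)) u ↔ Occurs pos val x (u + v) :=
    forall_congr' fun i => by rw [add_right_comm]
  change markerFun pos val a b _ u = markerFun pos val a b x (u + v)
  by_cases hu : Occurs pos val x (u + v)
  · simp [markerFun, this, hu]
  · rw [markerFun_of_not hu, markerFun_of_not (mt this.1 hu)]

/-! ### Construction of a universal non-overlapping pattern -/

/-- Translates of a finite set by distinct multiples of a suitable vector are disjoint. -/
theorem exists_direction {d : ℕ} (hd : 1 ≤ d) (M : Finset (Fin d → ℤ)) :
    ∃ r : Fin d → ℤ, ∀ (j j' : ℤ), ∀ m ∈ M, ∀ m' ∈ M,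
      j • r + m = j' • r + m' → j = j' ∧ m = m' := by
  let k : Fin d := ⟨0, hd⟩
  let ρ : ℤ := ∑ m ∈ M, |m k|
  have hρ : ∀ m ∈ M, |m k| ≤ ρ := fun m hm =>
    Finset.single_le_sum (f := fun m : Fin d → ℤ => |m k|) (fun _ _ => abs_nonneg _) hm
  refine ⟨fun _ => 2 * ρ + 1, fun j j' m hm m' hm' h => ?_⟩
  have hj : j = j' := by
    have h0 : j * (2 * ρ + 1) + m k = j' * (2 * ρ + 1) + m' k := by
      simpa using congrFun h k
    have h1 := abs_le.1 (hρ m hm)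
    have h2 := abs_le.1 (hρ m' hm')
    by_contra hne
    rcases lt_or_gt_of_ne hne with hlt | hlt <;> nlinarith
  subst hj
  exact ⟨rfl, add_left_cancel h⟩

/-- There is a non-overlapping pattern, with support avoiding the origin, that contains every
element of `A^M` as a block. It is made of blocks `j • r + M` for `0 < |j| ≤ 2 * L`. The blocks
with `j < -L` are constantly `b`, those with `1 ≤ j ≤ L - 2` run through `A^M`, and all others
are constantly `a`. -/
theorem exists_marker {d : ℕ} (hd : 1 ≤ d) {A : Type*} [Finite A] {a b : A} (hab : a ≠ b)
    (M : Finset (Fin d → ℤ)) (h0 : 0 ∈ M) :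
    ∃ (ι : Type) (_ : Finite ι) (pos : ι → Fin d → ℤ) (val : ι → A),
      NonOverlap pos val ∧ pos.Injective ∧ (∀ i, pos i ≠ 0) ∧
      ∀ y : (Fin d → ℤ) → A, ∃ s, ∀ m ∈ M, ∃ i, pos i = s + m ∧ val i = y m := by
  classical
  obtain ⟨r, hr⟩ := exists_direction hd M
  obtain ⟨Q, ⟨e⟩⟩ := Finite.exists_equiv_fin (M → A)
  let L : ℤ := Q + 2
  let J := {j : ℤ // j ∈ Finset.Icc (-(2 * L)) (2 * L) ∧ j ≠ 0}
  have hJ : Finite J :=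
    Finite.of_injective (fun j : J => (⟨j.1, j.2.1⟩ : Finset.Icc (-(2 * L)) (2 * L)))
      fun x y h => Subtype.ext (congrArg (fun z => z.1) h)
  let B : ℤ → M → A := fun j m =>
    if j < -L then b else if h : 1 ≤ j ∧ j ≤ Q then e.symm ⟨(j - 1).toNat, by omega⟩ m else a
  have hBb : ∀ j m, j < -L → B j m = b := fun j m hj => by simp [B, hj]
  have hBa : ∀ j m, -L ≤ j → (j ≤ 0 ∨ Q < j) → B j m = a := fun j m hj hj' => by
    have h1 : ¬ j < -L := by omega
    have h2 : ¬ (1 ≤ j ∧ j ≤ Q) := by omega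
    simp only [B, h1, h2, if_false, dif_neg, not_false_eq_true]
  -- Every positive displacement of blocks carries some `b`-block to some `a`-block.
  have hpair : ∀ k : ℤ, 1 ≤ k → k ≤ 2 * L → ∃ j j' : J, j'.1 = j.1 + k ∧
      (∀ m, B j.1 m = b) ∧ ∀ m, B j'.1 m = a := by
    intro k hk1 hk2
    have hex : ∃ j : ℤ, -(2 * L) ≤ j ∧ j < -L ∧ -L ≤ j + k ∧ j + k ≤ 2 * L ∧
        (j + k < 0 ∨ Q < j + k) := by
      by_cases h1 : k ≤ L
      · exact ⟨-L - 1, by omega⟩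
      by_cases h2 : k < 2 * L
      · exact ⟨-(2 * L), by omega⟩
      · exact ⟨-L - 1, by omega⟩
    obtain ⟨j, c1, c2, c3, c4, c5⟩ := hex
    refine ⟨⟨j, Finset.mem_Icc.2 ⟨c1, by omega⟩, by omega⟩,
      ⟨j + k, Finset.mem_Icc.2 ⟨by omega, c4⟩, by omega⟩, rfl, fun m => hBb _ _ c2,
      fun m => hBa _ _ c3 (c5.imp le_of_lt id)⟩
  refine ⟨J × M, inferInstance, fun i => i.1.1 • r + i.2.1, fun i => B i.1.1 i.2, ?_, ?_, ?_, ?_⟩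
  · rintro ⟨⟨k, hk, hk0⟩, m⟩
    rw [Finset.mem_Icc] at hk
    rcases lt_or_gt_of_ne hk0 with hneg | hpos
    · obtain ⟨j, j', hjj, hb, ha⟩ := hpair (-k) (by omega) (by omega)
      refine ⟨(j', ⟨0, h0⟩), (j, m), ?_, ?_⟩
      · have : j.1 = k + j'.1 := by omega
        simp only [this, add_smul]; abel
      · simp only [hb, ha]; exact hab.symm
    · obtain ⟨j, j', hjj, hb, ha⟩ := hpair k (by omega) (by omega)
      refine ⟨(j, ⟨0, h0⟩), (j', m), ?_, ?_⟩
      · simp only [hjj, add_smul]; abel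
      · simp only [hb, ha]; exact hab
  · rintro ⟨j, m⟩ ⟨j', m'⟩ h
    obtain ⟨h1, h2⟩ := hr _ _ _ m.2 _ m'.2 h
    exact Prod.ext (Subtype.ext h1) (Subtype.ext h2)
  · rintro ⟨j, m⟩ h
    refine j.2.2 ?_
    have := hr j.1 0 m.1 m.2 0 h0 (by simpa using h)
    exact this.1
  · intro y
    let n := e fun m => y m.1
    have hn := n.2
    refine ⟨((n.1 : ℤ) + 1) • r, fun m hm => ?_⟩
    refine ⟨(⟨(n.1 : ℤ) + 1, Finset.mem_Icc.2 ⟨by omega, by omega⟩, by omega⟩, ⟨m, hm⟩), rfl, ?_⟩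
    have h1 : ¬ ((n.1 : ℤ) + 1 < -L) := by omega
    have h2 : 1 ≤ (n.1 : ℤ) + 1 ∧ (n.1 : ℤ) + 1 ≤ Q := by omega
    simp only [B, h1, h2, if_false]
    simp [n]

/-! ### The center -/

/-- The center of `Aut(A^{ℤ^d})` equals `Σ(A^{ℤ^d})`, the group of shifts. -/
theorem center_eq_shiftsD
    (d : ℕ) (hd : 1 ≤ d)
    (A : Type*) [Fintype A] [TopologicalSpace A] [DiscreteTopology A]
    (hA : 2 ≤ Fintype.card A) :
    ∀ g : ShiftAutD d A,
      g ∈ Subgroup.center (ShiftAutD d A) ↔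
        ∃ v : Fin d → ℤ,
          (g : ((Fin d → ℤ) → A) ≃ₜ ((Fin d → ℤ) → A)) = shiftD d A v := by
  rintro ⟨f, hf⟩
  rw [Subgroup.mem_center_iff]
  constructor
  · intro hcen
    classical
    have hsh := mem_shiftAutD.1 hf
    obtain ⟨a, b, hab⟩ := Fintype.exists_pair_of_one_lt_card (α := A) (by omega)
    obtain ⟨M₀, hM₀⟩ := exists_memory (fun x => f x 0) ((continuous_apply 0).comp f.continuous)
    let M := insert 0 M₀
    have hM : ∀ x y : (Fin d → ℤ) → A, ∀ s t, (∀ m ∈ M, x (s + m) = y (t + m)) →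
        f x s = f y t := by
      intro x y s t h
      have h1 := hsh s x 0
      have h2 := hsh t y 0
      rw [zero_add] at h1 h2
      rw [← h1, ← h2]
      refine hM₀ _ _ fun m hm => ?_
      rw [add_comm m, add_comm m]
      exact h m (Finset.mem_insert_of_mem hm)
    obtain ⟨ι, hι, pos, val, hno, hinj, hne, hall⟩ :=
      exists_marker hd hab M (Finset.mem_insert_self _ _)
    have hcomm : ∀ x, f (markerFun pos val a b x) = markerFun pos val a b (f x) := by
      intro x
      have h := congrArg Subtype.val (hcen ⟨markerAut hno a b, markerAut_mem hno a b⟩)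
      exact (DFunLike.congr_fun h x).symm
    let x : (Fin d → ℤ) → A := Function.extend pos val fun _ => a
    have hxocc : Occurs pos val x 0 := fun i => by
      rw [zero_add]; exact hinj.extend_apply _ _ _
    have hx0 : x 0 = a := Function.extend_apply' _ _ _ fun ⟨i, hi⟩ => hne i hi
    have hmove : markerFun pos val a b x ≠ x := fun h => by
      have := congrFun h 0
      rw [markerFun, if_pos hxocc, hx0, Equiv.swap_apply_left] at this
      exact hab this.symm
    have hfmove : markerFun pos val a b (f x) ≠ f x := fun h =>
      hmove (f.injective ((hcomm x).trans h))
    obtain ⟨u, hu⟩ := Function.ne_iff.1 hfmove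
    have hfocc := occurs_of_markerFun_ne hu
    have hex : ∃ m ∈ M, markerFun pos val a b x (u + m) ≠ x (u + m) := by
      by_contra! hcon
      exact hu (by rw [← hcomm]; exact hM _ _ _ _ hcon)
    obtain ⟨m, hm, hum⟩ := hex
    have hocc := occurs_of_markerFun_ne hum
    refine ⟨m, Homeomorph.ext fun y => funext fun t => ?_⟩
    change f y t = y (t + m)
    obtain ⟨s, hs⟩ := hall fun w => y (t + w)
    -- The block `y (t + ·)` is read in `x` at `u + m + s`, whose image under `f` lies at the
    -- site `s + m` of the occurrence of the pattern in `f x` at `u`.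
    have h1 : f y t = f x (u + m + s) := hM _ _ _ _ fun w hw => by
      obtain ⟨i, hi, hv⟩ := hs w hw
      rw [← hv, ← hocc i, hi, add_assoc (u + m)]
    obtain ⟨i, hi, hv⟩ := hs m hm
    rw [h1, ← hv, ← hfocc i, hi, add_assoc, add_comm m s]
  · rintro ⟨v, hv⟩ ⟨g, hg⟩
    apply Subtype.ext
    change g * f = f * g
    change f = _ at hv
    rw [hv]
    exact (Subgroup.mem_centralizer_iff.1 hg _ ⟨v, rfl⟩).symm
end

section
/- Let G be a discrete group acting by homeomorphisms on a compact metric space X such that the action is minimal and strongly proximal, and such that the kernel of the action is exactly the center Z(G) (equivalently, the induced action of G/Z(G) on X is faithful). Then every normal amenable subgroup of G is contained in Z(G). -/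
/-!
An amenable group acting on a nonempty compact space preserves a Borel probability measure: average
the functions `n ↦ f (n • x₀)` along an orbit with the invariant mean and represent the resulting
positive functional by a measure with the Riesz–Markov–Kakutani theorem
(`IsAmenable.exists_invariant_measure`). Apply this to the normal subgroup `N`, obtaining `μ`. By
strong proximality, translates `g k • μ` converge to a point mass at some `x`. Since `N` is normal,
every `g k • μ` is again `N`-invariant, hence so is the limit, i.e. `N` fixes `x`. Normality also
makes the fixed-point set of `N` invariant under `G`; it is closed and contains `x`, so by
minimality it is all of `X`. Thus `N` lies in the kernel of the action, which is the center.
-/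

open Filter MeasureTheory

open scoped CompactlySupported BoundedContinuousFunction

/-- An amenable group acting by homeomorphisms on a nonempty compact Hausdorff space preserves a
Borel probability measure; invariance is expressed through integrals of continuous functions. -/
theorem IsAmenable.exists_invariant_measure {H X : Type*} [Group H] (hH : IsAmenable H)
    [TopologicalSpace X] [T2Space X] [CompactSpace X] [Nonempty X]
    [MeasurableSpace X] [BorelSpace X] [MulAction H X]
    (hcont : ∀ h : H, Continuous fun x : X => h • x) :
    ∃ μ : Measure X, IsProbabilityMeasure μ ∧
      ∀ (h : H) (f : X → ℝ), Continuous f → ∫ y, f (h • y) ∂μ = ∫ y, f y ∂μ := by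
  obtain ⟨m, hadd, hsmul, hpos, hone, hinv⟩ := hH
  obtain ⟨x₀⟩ := ‹Nonempty X›
  have hbdd : ∀ f : X → ℝ, Continuous f → ∃ C, ∀ h : H, |f (h • x₀)| ≤ C := by
    intro f hf
    obtain ⟨C, hC⟩ := isCompact_univ.exists_bound_of_continuousOn hf.continuousOn
    exact ⟨C, fun h => hC _ (Set.mem_univ _)⟩
  let L : C_c(X, ℝ) →ₗ[ℝ] ℝ :=
    { toFun := fun f => m fun h => f (h • x₀)
      map_add' := fun f₁ f₂ =>
        hadd _ _ (hbdd f₁ f₁.continuous) (hbdd f₂ f₂.continuous)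
      map_smul' := fun c f => hsmul c _ (hbdd f f.continuous) }
  let Λ : C_c(X, ℝ) →ₚ[ℝ] ℝ := PositiveLinearMap.mk₀ L fun f hf =>
    hpos _ (hbdd f f.continuous) fun h => hf (h • x₀)
  have hΛ : ∀ f : X → ℝ, Continuous f →
      ∫ y, f y ∂(RealRMK.rieszMeasure Λ) = m fun h => f (h • x₀) := fun f hf =>
    RealRMK.integral_rieszMeasure Λ ⟨⟨f, hf⟩, HasCompactSupport.of_compactSpace _⟩
  refine ⟨RealRMK.rieszMeasure Λ, ⟨?_⟩, fun h f hf => ?_⟩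
  · have h1 := hΛ (fun _ => 1) continuous_const
    rw [hone] at h1
    simpa [Measure.real, ENNReal.toReal_eq_one_iff] using h1
  · rw [hΛ (fun y => f (h • y)) (hf.comp (hcont h)), hΛ f hf, ← hinv h _ (hbdd f hf)]
    simp only [mul_smul]

/-- If a group `G` acts on a compact metric space `X` by homeomorphisms,
the action is minimal and strongly proximal (i.e. `X` is a topological boundary
of `G`), and the kernel of the action is exactly the center of `G`, then every
normal amenable subgroup of `G` is contained in the center of `G`. -/
theorem normal_amenable_le_center_of_boundary
    {G X : Type*} [Group G] [MetricSpace X] [CompactSpace X]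
    [MeasurableSpace X] [BorelSpace X] [MulAction G X]
    (hcont : ∀ g : G, Continuous fun x : X => g • x)
    (hmin : ∀ x : X, Dense (MulAction.orbit G x))
    (hprox : ∀ μ : Measure X, IsProbabilityMeasure μ →
      ∃ (g : ℕ → G) (x : X), ∀ f : BoundedContinuousFunction X ℝ,
        Tendsto (fun k => ∫ y, f (g k • y) ∂μ) atTop (nhds (f x)))
    (hker : ∀ g : G, (∀ x : X, g • x = x) ↔ g ∈ Subgroup.center G)
    (N : Subgroup G) (hN : N.Normal) (hNa : IsAmenable N) :
    N ≤ Subgroup.center G := by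
  intro n hn
  rw [← hker]
  intro z
  have : Nonempty X := ⟨z⟩
  obtain ⟨μ, hμ, hinv⟩ := hNa.exists_invariant_measure (X := X) fun h => hcont h
  obtain ⟨g, x, hx⟩ := hprox μ hμ
  have hfix : ∀ a ∈ N, a • x = x := by
    intro a ha
    -- The distance to `x` separates `a • x` from `x`.
    let f : X →ᵇ ℝ := BoundedContinuousFunction.mkOfCompact ⟨fun y => dist y x, by fun_prop⟩
    let fa : X →ᵇ ℝ := BoundedContinuousFunction.mkOfCompact
      ⟨fun y => dist (a • y) x, (hcont a).dist continuous_const⟩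
    have heq : ∀ k, ∫ y, fa (g k • y) ∂μ = ∫ y, f (g k • y) ∂μ := by
      intro k
      -- Moving `a` past `g k` replaces it by its conjugate, which lies in `N` and preserves `μ`.
      have hmem : (g k)⁻¹ * a * g k ∈ N := by
        simpa using hN.conj_mem a ha (g k)⁻¹
      rw [← hinv ⟨_, hmem⟩ (fun y => f (g k • y)) (f.continuous.comp (hcont (g k)))]
      congr 1
      ext y
      change dist (a • g k • y) x = dist (g k • ((g k)⁻¹ * a * g k) • y) x
      simp [smul_smul, mul_assoc]
    have hlim := hx fa
    simp only [heq] at hlim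
    have h0 : dist (a • x) x = dist x x := tendsto_nhds_unique hlim (hx f)
    simpa using h0
  have hclosed : IsClosed {y : X | n • y = y} := isClosed_eq (hcont n) continuous_id
  have horbit : MulAction.orbit G x ⊆ {y : X | n • y = y} := by
    rintro _ ⟨b, rfl⟩
    have hmem : b⁻¹ * n * b ∈ N := by simpa using hN.conj_mem n hn b⁻¹
    have h1 := congrArg (fun y => b • y) (hfix _ hmem)
    simpa [smul_smul, mul_assoc] using h1
  exact hclosed.closure_subset_iff.mpr horbit (hmin x z)
end

section
/- Let H be a discrete group acting by homeomorphisms on a compact metric space X with at least three points, such that the action is minimal and extremely proximal. Then H contains a free subgroup on two generators (Glasner's Theorem). -/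
/-!
The proof is a ping-pong argument. Combining extreme proximality with minimality, every nonempty
proper closed set can be moved by a group element into any prescribed nonempty open set
(`exists_smul_mem_of_isClosed`). In particular `X` is infinite: in a finite `X` singletons are open,
and a two-point set, proper because `X` has a third point, could be moved into a singleton,
contradicting injectivity of the action.

An infinite Hausdorff space contains pairwise disjoint nonempty open sets `U 0, U 1, U 2, U 3`.
Choose `a, b : H` mapping the complement of `U 1` into `U 0` and the complement of `U 3` into
`U 2`; taking complements, `a⁻¹` maps the complement of `U 0` into `U 1`, and similarly for `b⁻¹`.
By the ping-pong lemma, `a` and `b` freely generate a free group.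
-/

open Filter

/-- Hausdorff convergence `g k • Y → {x}` places some `g k • Y` in any neighbourhood of `x`, and
minimality lets `x` be carried into `U`. -/
lemma exists_smul_mem_of_isClosed
    {H X : Type*} [Group H] [MetricSpace X] [CompactSpace X] [MulAction H X]
    (hcont : ∀ g : H, Continuous fun x : X => g • x)
    (hmin : ∀ x : X, Dense (MulAction.orbit H x))
    (hext : ∀ Y : Set X, IsClosed Y → Y.Nonempty → Y ≠ Set.univ →
      ∃ (g : ℕ → H) (x : X),
        Tendsto (fun k => Metric.hausdorffDist ((fun y => g k • y) '' Y) {x})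
          atTop (nhds 0))
    {Y U : Set X} (hY : IsClosed Y) (hYne : Y.Nonempty) (hYuniv : Y ≠ Set.univ)
    (hU : IsOpen U) (hUne : U.Nonempty) :
    ∃ h : H, ∀ y ∈ Y, h • y ∈ U := by
  obtain ⟨g, x, hg⟩ := hext Y hY hYne hYuniv
  obtain ⟨_, ⟨t, rfl⟩, hxU⟩ := (hmin x).exists_mem_open hU hUne
  obtain ⟨ε, hε, hball⟩ := Metric.isOpen_iff.1 (hU.preimage (hcont t)) x hxU
  obtain ⟨k, hk⟩ := (hg.eventually_lt_const hε).exists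
  refine ⟨t * g k, fun y hy => ?_⟩
  have hfin : Metric.hausdorffEDist ((fun y => g k • y) '' Y) {x} ≠ ⊤ :=
    Metric.hausdorffEDist_ne_top_of_nonempty_of_bounded (hYne.image _)
      (Set.singleton_nonempty x) (Metric.isBounded_of_compactSpace)
      (Metric.isBounded_of_compactSpace)
  obtain ⟨z, rfl, hz⟩ :=
    Metric.exists_dist_lt_of_hausdorffDist_lt (Set.mem_image_of_mem _ hy) hk hfin
  rw [mul_smul]
  exact hball hz

/-- Glasner's Theorem: if a group `H` acts by homeomorphisms on a compact
metric space `X` with at least three points, and the action is minimal and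
extremely proximal, then `H` contains a free subgroup on two generators. -/
theorem free_subgroup_of_extremely_proximal
    {H X : Type*} [Group H] [MetricSpace X] [CompactSpace X] [MulAction H X]
    (hcont : ∀ g : H, Continuous fun x : X => g • x)
    (hcard : ∃ x y z : X, x ≠ y ∧ x ≠ z ∧ y ≠ z)
    (hmin : ∀ x : X, Dense (MulAction.orbit H x))
    (hext : ∀ Y : Set X, IsClosed Y → Y.Nonempty → Y ≠ Set.univ →
      ∃ (g : ℕ → H) (x : X),
        Tendsto (fun k => Metric.hausdorffDist ((fun y => g k • y) '' Y) {x})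
          atTop (nhds 0)) :
    ∃ f : FreeGroup (Fin 2) →* H, Function.Injective f := by
  obtain ⟨x, y, z, hxy, hxz, hyz⟩ := hcard
  have hinf : Infinite X := by
    by_contra hfin
    rw [not_infinite_iff_finite] at hfin
    have hproper : ({x, y} : Set X) ≠ Set.univ := fun h => by
      have hz : z ∈ ({x, y} : Set X) := h ▸ Set.mem_univ z
      rcases hz with rfl | rfl
      exacts [hxz rfl, hyz rfl]
    obtain ⟨h, hh⟩ := exists_smul_mem_of_isClosed hcont hmin hext (Set.toFinite {x, y}).isClosed
      ⟨x, by simp⟩ hproper (isOpen_discrete {z}) (Set.singleton_nonempty z)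
    have hx : h • x = z := hh x (by simp)
    have hy : h • y = z := hh y (by simp)
    exact hxy (MulAction.injective h (hx.trans hy.symm))
  obtain ⟨U, hUinf, hUopen, hUdisj⟩ := exists_seq_infinite_isOpen_pairwise_disjoint X
  have hmove : ∀ m n, m ≠ n → ∃ h : H, ∀ p ∈ (U n)ᶜ, h • p ∈ U m := fun m n hmn => by
    refine exists_smul_mem_of_isClosed hcont hmin hext (hUopen n).isClosed_compl ?_ ?_
      (hUopen m) (hUinf m).nonempty
    · exact (hUinf m).nonempty.mono (hUdisj hmn).subset_compl_right
    · rw [Ne, Set.compl_univ_iff]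
      exact (hUinf n).nonempty.ne_empty
  have hgen : ∀ i : ULift (Fin 2), ∃ h : H,
      ∀ p ∈ (U (2 * i.down + 1))ᶜ, h • p ∈ U (2 * i.down) := fun i => hmove _ _ (by omega)
  choose a ha using hgen
  -- `ULift` places the index type in the universe of `H`, as the ping-pong lemma requires.
  have hinj : Function.Injective (FreeGroup.lift a) := by
    refine FreeGroup.injective_lift_of_ping_pong a (fun i => U (2 * i.down))
      (fun i => U (2 * i.down + 1)) (fun i => (hUinf _).nonempty) ?_ ?_ ?_ ?_ ?_
    · intro i j hij
      refine hUdisj fun h => hij (ULift.ext _ _ (Fin.ext (by omega)))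
    · intro i j hij
      refine hUdisj fun h => hij (ULift.ext _ _ (Fin.ext (by omega)))
    · intro i j
      exact hUdisj (by omega)
    · rintro i _ ⟨p, hp, rfl⟩
      exact ha i p hp
    · rintro i _ ⟨p, hp, rfl⟩
      by_contra hmem
      exact hp (by simpa using ha i _ hmem)
  exact ⟨(FreeGroup.lift a).comp (FreeGroup.freeGroupCongr Equiv.ulift.symm).toMonoidHom,
    hinj.comp (FreeGroup.freeGroupCongr Equiv.ulift.symm).injective⟩
end

section
/- Let H be a discrete group acting by homeomorphisms on a compact metric space X with at least three points, such that the action is minimal and extremely proximal. Then the action is strongly proximal. -/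
open Filter MeasureTheory

/-!
Extreme proximality contracts a two-point set (a proper subset, since `X` has three points), which
is impossible in a finite metric space; hence `X` is infinite. An infinite Hausdorff space contains
infinitely many disjoint nonempty open sets, so for every `ε > 0` some nonempty open `U` has
`μ U < ε`. Contracting the closed set `Uᶜ` gives `g` and `x` such that `g • y` is `ε`-close to `x`
for all `y` outside a set of measure `< ε`. Doing this with `ε = 2⁻ⁿ` and passing to a subsequence
along which the centres converge, Borel–Cantelli gives `g n • y → x` for almost every `y`, and
dominated convergence concludes.
-/

/-- A set whose images converge to a singleton in the Hausdorff distance is uniformly contracted: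
some group element moves it into an arbitrarily small ball around the limit. -/
lemma exists_smul_dist_lt {H X : Type*} [Group H] [MetricSpace X] [CompactSpace X] [MulAction H X]
    {Y : Set X} (hne : Y.Nonempty) {g : ℕ → H} {x : X}
    (h : Tendsto (fun k => Metric.hausdorffDist ((fun y => g k • y) '' Y) {x}) atTop (nhds 0))
    {ε : ℝ} (hε : 0 < ε) : ∃ a : H, ∀ y ∈ Y, dist (a • y) x < ε := by
  obtain ⟨k, hk⟩ := (h.eventually (gt_mem_nhds hε)).exists
  refine ⟨g k, fun y hy => ?_⟩
  have hfin : Metric.hausdorffEDist ((fun y => g k • y) '' Y) {x} ≠ ⊤ :=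
    Metric.hausdorffEDist_ne_top_of_nonempty_of_bounded (hne.image _) (Set.singleton_nonempty x)
      Metric.isBounded_of_compactSpace Metric.isBounded_of_compactSpace
  have := Metric.infDist_le_hausdorffDist_of_mem (Set.mem_image_of_mem (fun y => g k • y) hy) hfin
  rw [Metric.infDist_singleton] at this
  exact this.trans_lt hk

lemma infinite_of_extremely_proximal
    {H X : Type*} [Group H] [MetricSpace X] [CompactSpace X] [MulAction H X]
    (hcard : ∃ x y z : X, x ≠ y ∧ x ≠ z ∧ y ≠ z)
    (hext : ∀ Y : Set X, IsClosed Y → Y.Nonempty → Y ≠ Set.univ →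
      ∃ (g : ℕ → H) (x : X),
        Tendsto (fun k => Metric.hausdorffDist ((fun y => g k • y) '' Y) {x})
          atTop (nhds 0)) : Infinite X := by
  by_contra hfin
  rw [not_infinite_iff_finite] at hfin
  obtain ⟨x, y, z, hxy, hxz, hyz⟩ := hcard
  have hne : ({x, y} : Set X).Nonempty := Set.insert_nonempty _ _
  have hproper : ({x, y} : Set X) ≠ Set.univ := fun h => by
    have : z ∈ ({x, y} : Set X) := h ▸ Set.mem_univ z
    rcases this with h | h
    exacts [hxz h.symm, hyz h.symm]
  obtain ⟨g, p, hg⟩ := hext {x, y} (Set.toFinite _).isClosed hne hproper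
  -- In a finite metric space the ball of some radius around `p` is `{p}`.
  obtain ⟨ε, hε, hball⟩ := Metric.isOpen_iff.1 (isOpen_discrete ({p} : Set X)) p rfl
  obtain ⟨a, ha⟩ := exists_smul_dist_lt hne hg hε
  have h1 : a • x = p := hball (ha x (by simp))
  have h2 : a • y = p := hball (ha y (by simp))
  exact hxy (MulAction.injective a (h1.trans h2.symm))

lemma exists_isOpen_nonempty_measure_lt {X : Type*} [MetricSpace X] [Infinite X]
    [MeasurableSpace X] [BorelSpace X] (μ : Measure X) [IsFiniteMeasure μ]
    {ε : ENNReal} (hε : 0 < ε) : ∃ U : Set X, IsOpen U ∧ U.Nonempty ∧ μ U < ε := by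
  obtain ⟨U, hinf, hopen, hdisj⟩ := exists_seq_infinite_isOpen_pairwise_disjoint X
  have hsum : ∑' n, μ (U n) ≠ ⊤ := by
    rw [← measure_iUnion hdisj fun n => (hopen n).measurableSet]
    exact measure_ne_top _ _
  obtain ⟨n, hn⟩ :=
    ((ENNReal.tendsto_atTop_zero_of_tsum_ne_top hsum).eventually (gt_mem_nhds hε)).exists
  exact ⟨U n, hopen n, (hinf n).nonempty, hn⟩

/-- If a group `H` acts by homeomorphisms on a compact metric space `X` with at
least three points, and the action is minimal and extremely proximal, then the
action is strongly proximal: every Borel probability measure on `X` can be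
pushed by a sequence of group elements to converge weak* to a point mass. -/
theorem stronglyProximal_of_extremely_proximal
    {H X : Type*} [Group H] [MetricSpace X] [CompactSpace X]
    [MeasurableSpace X] [BorelSpace X] [MulAction H X]
    (hcont : ∀ g : H, Continuous fun x : X => g • x)
    (hcard : ∃ x y z : X, x ≠ y ∧ x ≠ z ∧ y ≠ z)
    (hmin : ∀ x : X, Dense (MulAction.orbit H x))
    (hext : ∀ Y : Set X, IsClosed Y → Y.Nonempty → Y ≠ Set.univ →
      ∃ (g : ℕ → H) (x : X),
        Tendsto (fun k => Metric.hausdorffDist ((fun y => g k • y) '' Y) {x})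
          atTop (nhds 0)) :
    ∀ μ : Measure X, IsProbabilityMeasure μ →
      ∃ (g : ℕ → H) (x : X), ∀ f : BoundedContinuousFunction X ℝ,
        Tendsto (fun k => ∫ y, f (g k • y) ∂μ) atTop (nhds (f x)) := by
  intro μ hμ
  have : Infinite X := infinite_of_extremely_proximal hcard hext
  have key : ∀ n : ℕ, ∃ (U : Set X) (a : H) (p : X), μ U ≤ (2⁻¹ : ENNReal) ^ n ∧
      ∀ y ∉ U, dist (a • y) p < (2⁻¹ : ℝ) ^ n := by
    intro n
    obtain ⟨U, hU, hne, hlt⟩ := exists_isOpen_nonempty_measure_lt μ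
      (ε := (2⁻¹ : ENNReal) ^ n) (ENNReal.pow_pos (by simp) n)
    have hle : (2⁻¹ : ENNReal) ^ n ≤ 1 := pow_le_one₀ (by simp) (by simp)
    have hcne : (Uᶜ).Nonempty := by
      rw [Set.nonempty_compl]
      rintro rfl
      rw [measure_univ] at hlt
      exact absurd hle hlt.not_ge
    obtain ⟨g, p, hg⟩ := hext Uᶜ hU.isClosed_compl hcne (by
      rw [Ne, Set.compl_univ_iff]; exact hne.ne_empty)
    obtain ⟨a, ha⟩ := exists_smul_dist_lt hcne hg (ε := (2⁻¹ : ℝ) ^ n) (by positivity)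
    exact ⟨U, a, p, hlt.le, ha⟩
  choose U a p hU hp using key
  obtain ⟨x, φ, hφ, hx⟩ := CompactSpace.tendsto_subseq p
  have hae : ∀ᵐ y ∂μ, Tendsto (fun k => a (φ k) • y) atTop (nhds x) := by
    have hsum : ∑' n, μ (U n) ≠ ⊤ := by
      refine ne_top_of_le_ne_top ?_ (ENNReal.tsum_le_tsum hU)
      rw [ENNReal.tsum_geometric, ENNReal.one_sub_inv_two]
      simp
    filter_upwards [ae_eventually_notMem hsum] with y hy
    have hpow : Tendsto (fun n : ℕ => (2⁻¹ : ℝ) ^ n) atTop (nhds 0) :=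
      tendsto_pow_atTop_nhds_zero_of_lt_one (by norm_num) (by norm_num)
    have hd : Tendsto (fun n => dist (p n) (a n • y)) atTop (nhds 0) :=
      squeeze_zero' (Eventually.of_forall fun _ => dist_nonneg)
        (hy.mono fun n hn => by rw [dist_comm]; exact (hp n y hn).le) hpow
    exact (tendsto_iff_of_dist (hd.comp hφ.tendsto_atTop)).1 hx
  refine ⟨fun k => a (φ k), x, fun f => ?_⟩
  have hlim : ∫ _, f x ∂μ = f x := by simp
  rw [← hlim]
  refine tendsto_integral_of_dominated_convergence (fun _ => ‖f‖)
    (fun k => (f.continuous.comp (hcont _)).aestronglyMeasurable) (integrable_const _)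
    (fun k => Eventually.of_forall fun y => f.norm_coe_le_norm _) ?_
  filter_upwards [hae] with y hy
  exact (f.continuous.tendsto x).comp hy
end

section
/- Let H be a discrete group acting by homeomorphisms on compact metric spaces X_1, …, X_n, each action being minimal and strongly proximal. Then the diagonal action of H on the product X_1 × ⋯ × X_n (with the product topology) is strongly proximal. -/
/-!
The argument takes place in the space of Borel probability measures on `∏ i, X i` with the weak
topology, which is compact (Prokhorov) and metrizable because the product is compact metric. It
suffices to find a point mass in the closure of the `H`-orbit of `μ`; metrizability then yields a
sequence in `H`.

The coordinates are made degenerate one at a time (`exists_mem_closure_forall_marginal_mem_range`).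
Let `ν` be a measure in the orbit closure whose marginals at the coordinates in `S` are point
masses, and let `a ∉ S`. Strong proximality of `X a` gives `g k` such that the `a`-th marginals
of `g k • ν` converge to a point mass; by compactness a subsequence of `g k • ν` converges, to a
measure in the (closed, invariant) orbit closure. Its `a`-th marginal is a point mass, and so are
its marginals at `S`, since these are limits of point masses and the set of point masses of a
compact space is closed. Once every marginal is a point mass, so is the measure itself
(`eq_diracProba_of_marginal`).
-/

open Filter MeasureTheory Topology

section

variable {H : Type*} [Group H]

/-- Pushforward of a probability measure under the homeomorphism given by `g`. -/
noncomputable def probTranslate {Y : Type*} [TopologicalSpace Y] [MeasurableSpace Y] [BorelSpace Y]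
    [MulAction H Y] (hY : ∀ g : H, Continuous fun y : Y => g • y) (g : H)
    (ν : ProbabilityMeasure Y) : ProbabilityMeasure Y :=
  ν.map (hY g).measurable.aemeasurable

lemma continuous_probTranslate {Y : Type*} [TopologicalSpace Y] [MeasurableSpace Y] [BorelSpace Y]
    [MulAction H Y] (hY : ∀ g : H, Continuous fun y : Y => g • y) (g : H) :
    Continuous (probTranslate hY g) :=
  ProbabilityMeasure.continuous_map (hY g)

lemma probTranslate_mul {Y : Type*} [TopologicalSpace Y] [MeasurableSpace Y] [BorelSpace Y]
    [MulAction H Y] (hY : ∀ g : H, Continuous fun y : Y => g • y) (g h : H)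
    (ν : ProbabilityMeasure Y) :
    probTranslate hY g (probTranslate hY h ν) = probTranslate hY (g * h) ν := by
  apply ProbabilityMeasure.toMeasure_injective
  simp only [probTranslate, ProbabilityMeasure.toMeasure_map]
  rw [Measure.map_map (hY g).measurable (hY h).measurable]
  congr 1
  ext y
  simp [mul_smul]

lemma probTranslate_mem_closure {Y : Type*} [TopologicalSpace Y] [MeasurableSpace Y] [BorelSpace Y]
    [MulAction H Y] (hY : ∀ g : H, Continuous fun y : Y => g • y) (g : H)
    {μ ν : ProbabilityMeasure Y}
    (hν : ν ∈ closure (Set.range fun h => probTranslate hY h μ)) :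
    probTranslate hY g ν ∈ closure (Set.range fun h => probTranslate hY h μ) := by
  refine map_mem_closure (continuous_probTranslate hY g) hν ?_
  rintro _ ⟨h, rfl⟩
  exact ⟨g * h, (probTranslate_mul hY g h μ).symm⟩

lemma isClosed_range_diracProba {Y : Type*} [MetricSpace Y] [CompactSpace Y] [MeasurableSpace Y]
    [BorelSpace Y] : IsClosed (Set.range (diracProba (X := Y))) :=
  (isCompact_range continuous_diracProba).isClosed

variable {ι : Type*} [Fintype ι] {X : ι → Type*} [∀ i, MetricSpace (X i)]
  [∀ i, CompactSpace (X i)] [∀ i, MulAction H (X i)] [∀ i, MeasurableSpace (X i)]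
  [∀ i, BorelSpace (X i)] [MeasurableSpace (∀ i, X i)] [BorelSpace (∀ i, X i)]

/-- The `i`-th marginal. Measurability of the evaluation comes from its continuity, since the
σ-algebra on the product is the Borel one and not literally `MeasurableSpace.pi`. -/
noncomputable def marginal (i : ι) (ν : ProbabilityMeasure (∀ i, X i)) :
    ProbabilityMeasure (X i) :=
  ν.map (continuous_apply i).measurable.aemeasurable

lemma continuous_marginal (i : ι) :
    Continuous (marginal i : ProbabilityMeasure (∀ i, X i) → ProbabilityMeasure (X i)) :=
  ProbabilityMeasure.continuous_map (continuous_apply i)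

lemma marginal_probTranslate (hcont : ∀ (i : ι) (g : H), Continuous fun x : X i => g • x)
    (hY : ∀ g : H, Continuous fun y : (∀ i, X i) => g • y) (i : ι) (g : H)
    (ν : ProbabilityMeasure (∀ i, X i)) :
    marginal i (probTranslate hY g ν) = probTranslate (hcont i) g (marginal i ν) := by
  apply ProbabilityMeasure.toMeasure_injective
  simp only [probTranslate, marginal, ProbabilityMeasure.toMeasure_map]
  rw [Measure.map_map (continuous_apply i).measurable (hY g).measurable,
    Measure.map_map (hcont i g).measurable (continuous_apply i).measurable]
  rfl

lemma probTranslate_diracProba {Y : Type*} [TopologicalSpace Y] [MeasurableSpace Y] [BorelSpace Y]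
    [MulAction H Y] (hY : ∀ g : H, Continuous fun y : Y => g • y) (g : H) (y : Y) :
    probTranslate hY g (diracProba y) = diracProba (g • y) := by
  apply ProbabilityMeasure.toMeasure_injective
  simp only [probTranslate, diracProba, ProbabilityMeasure.toMeasure_map,
    ProbabilityMeasure.coe_mk]
  exact Measure.map_dirac' (hY g).measurable y

lemma eq_diracProba_of_marginal {ν : ProbabilityMeasure (∀ i, X i)} {x : ∀ i, X i}
    (h : ∀ i, marginal i ν = diracProba (x i)) : ν = diracProba x := by
  have h1 : ∀ᵐ y ∂(ν : Measure (∀ i, X i)), y = x := by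
    have h2 : ∀ i, ∀ᵐ y ∂(ν : Measure (∀ i, X i)), y i = x i := by
      intro i
      have h3 : ∀ᵐ z ∂(marginal i ν : Measure (X i)), z = x i := by
        rw [h i]
        exact (ae_dirac_iff (measurableSet_singleton (x i))).2 rfl
      exact ae_of_ae_map (continuous_apply i).measurable.aemeasurable h3
    filter_upwards [ae_all_iff.2 h2] with y hy using funext hy
  apply ProbabilityMeasure.toMeasure_injective
  calc (ν : Measure (∀ i, X i)) = Measure.map id (ν : Measure (∀ i, X i)) := Measure.map_id.symm
    _ = Measure.map (fun _ => x) (ν : Measure (∀ i, X i)) := Measure.map_congr h1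
    _ = (diracProba x : Measure (∀ i, X i)) := by
      rw [Measure.map_const]; simp [diracProba]

/-- The orbit closure of any probability measure contains a measure whose marginals at a prescribed
finite set of coordinates are point masses. -/
lemma exists_mem_closure_forall_marginal_mem_range
    (hcont : ∀ (i : ι) (g : H), Continuous fun x : X i => g • x)
    (hprox : ∀ i : ι, ∀ μ : Measure (X i), IsProbabilityMeasure μ →
      ∃ (g : ℕ → H) (x : X i), ∀ f : BoundedContinuousFunction (X i) ℝ,
        Tendsto (fun k => ∫ y, f (g k • y) ∂μ) atTop (nhds (f x)))
    (hY : ∀ g : H, Continuous fun y : (∀ i, X i) => g • y)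
    (μ : ProbabilityMeasure (∀ i, X i)) (S : Finset ι) :
    ∃ ν ∈ closure (Set.range fun h => probTranslate hY h μ),
      ∀ i ∈ S, marginal i ν ∈ Set.range (diracProba (X := X i)) := by
  classical
  induction S using Finset.induction_on with
  | empty => exact ⟨probTranslate hY 1 μ, subset_closure ⟨1, rfl⟩, by simp⟩
  | insert a S _ ih =>
    obtain ⟨ν, hν, hS⟩ := ih
    obtain ⟨g, x, hg⟩ := hprox a (marginal a ν) inferInstance
    obtain ⟨ν', φ, hφ, hlim⟩ := CompactSpace.tendsto_subseq fun k => probTranslate hY (g k) ν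
    have hmarg (i : ι) : Tendsto (fun k => probTranslate (hcont i) (g (φ k)) (marginal i ν))
        atTop (𝓝 (marginal i ν')) := by
      simpa only [Function.comp_def, marginal_probTranslate hcont] using
        ((continuous_marginal i).tendsto ν').comp hlim
    refine ⟨ν', isClosed_closure.mem_of_tendsto hlim
      (Eventually.of_forall fun k => probTranslate_mem_closure hY _ hν), fun i hi => ?_⟩
    rcases Finset.mem_insert.1 hi with rfl | hi
    · have hx : Tendsto (fun k => probTranslate (hcont i) (g k) (marginal i ν))
          atTop (𝓝 (diracProba x)) := by
        rw [ProbabilityMeasure.tendsto_iff_forall_integral_tendsto]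
        intro f
        convert hg f using 2
        · rename_i k
          exact integral_map (hcont i (g k)).measurable.aemeasurable
            f.continuous.aestronglyMeasurable
        · simp [diracProba]
      exact ⟨x, tendsto_nhds_unique (hx.comp hφ.tendsto_atTop) (hmarg i)⟩
    · obtain ⟨z, hz⟩ := hS i hi
      refine isClosed_range_diracProba.mem_of_tendsto (hmarg i) (Eventually.of_forall fun k => ?_)
      exact ⟨g (φ k) • z, by rw [← hz, probTranslate_diracProba]⟩

end

/-- A product of finitely many minimal and strongly proximal actions of a group
`H` on compact metric spaces, with the diagonal `H`-action, is strongly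
proximal. -/
theorem stronglyProximal_pi
    {H : Type*} [Group H] {n : ℕ} (X : Fin n → Type*)
    [∀ i, MetricSpace (X i)] [∀ i, CompactSpace (X i)] [∀ i, MulAction H (X i)]
    [∀ i, MeasurableSpace (X i)] [∀ i, BorelSpace (X i)]
    [MeasurableSpace (∀ i, X i)] [BorelSpace (∀ i, X i)]
    (hcont : ∀ (i : Fin n) (g : H), Continuous fun x : X i => g • x)
    (hmin : ∀ (i : Fin n) (x : X i), Dense (MulAction.orbit H x))
    (hprox : ∀ i : Fin n, ∀ μ : Measure (X i), IsProbabilityMeasure μ →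
      ∃ (g : ℕ → H) (x : X i), ∀ f : BoundedContinuousFunction (X i) ℝ,
        Tendsto (fun k => ∫ y, f (g k • y) ∂μ) atTop (nhds (f x))) :
    ∀ μ : Measure (∀ i, X i), IsProbabilityMeasure μ →
      ∃ (g : ℕ → H) (x : ∀ i, X i), ∀ f : BoundedContinuousFunction (∀ i, X i) ℝ,
        Tendsto (fun k => ∫ y, f (g k • y) ∂μ) atTop (nhds (f x)) := by
  intro μ hμ
  have hY : ∀ g : H, Continuous fun y : (∀ i, X i) => g • y := fun g =>
    continuous_pi fun i => (hcont i g).comp (continuous_apply i)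
  obtain ⟨ν, hν, hdirac⟩ :=
    exists_mem_closure_forall_marginal_mem_range hcont hprox hY ⟨μ, hμ⟩ Finset.univ
  choose x hx using fun i => hdirac i (Finset.mem_univ i)
  obtain rfl := eq_diracProba_of_marginal fun i => (hx i).symm
  obtain ⟨u, hu, hlim⟩ := mem_closure_iff_seq_limit.1 hν
  choose g hg using hu
  refine ⟨g, x, fun f => ?_⟩
  convert ProbabilityMeasure.tendsto_iff_forall_integral_tendsto.1 hlim f using 2
  · rename_i k
    rw [← hg k]
    exact (integral_map (hY (g k)).measurable.aemeasurable
      f.continuous.aestronglyMeasurable).symm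
  · simp [diracProba]
end

section
/- Let A be a finite alphabet with |A| ≥ 2. For every a ∈ A, the action of G* on Ω^a is extremely proximal: for every closed subset Y ⊊ Ω^a there exists a sequence g_k ∈ G* such that the sets g_k Y converge in the Hausdorff metric to a singleton. -/
/-!
Let `X ∈ Ω^a \ Y`. Since `Y` is closed, every `y ∈ Y` differs from `X` at one of the positions
`1, …, n`, for some `n`. Fix `d ≥ n`, `d > 0`. Say that a window of length `d` in a configuration of
`A^ℤ` is active if it contains `a^d` or `t = X 1 ⋯ X d`, is preceded by `a^(d+n)`, and is followed
by a word `u` of length `n` with `u 0 ≠ a` and `u ≠ X 1 ⋯ X n`. Exchanging `a^d` and `t` in all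
active windows is a local, shift-commuting rule. Active windows are far apart (`Active.far`), so the
exchange changes no context of another active window, the set of active windows is unchanged
(`active_toggle_iff`), and the rule is an involution (`toggle_toggle`), hence an automorphism of
`A^ℤ`. It fixes constant configurations and preserves left tails, so it lies in `G*`
(`toggleHomeo_mem_Gstar`).

For `y ∈ Y`, with first letters `a u`, the automorphism sends `a^∞ u ⋯` to `a^∞ t u ⋯`, so the image
of `y` in `Ω^a` agrees with `X` on `0, …, d` (`omegaAct_toggleHomeo`). As `d → ∞` the images of `Y`
converge to `{X}`.
-/

open Filter MeasureTheory

/-- `Ω`: the space of one-sided configurations whose zeroth symbol differs from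
the first. -/
def OmegaSet (A : Type*) : Set (ℕ → A) := {x | x 0 ≠ x 1}

/-- `Ω^a`: the elements of `Ω` whose zeroth symbol is `a`. -/
def OmegaA (A : Type*) (a : A) : Set (ℕ → A) := {x | x 0 = a ∧ x 0 ≠ x 1}

/-- `φ : Ω → A^ℤ_*` prepends an infinite constant `x 0` prefix to `x`. -/
def phiMap (A : Type*) (x : ℕ → A) : ℤ → A :=
  fun m => if m ≤ 0 then x 0 else x m.toNat

/-- `ℓ(y)`: the last coordinate of the constant prefix of `y ∈ A^ℤ_*`. -/
noncomputable def ellVal (A : Type*) (y : ℤ → A) : ℤ :=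
  sInf {m : ℤ | y m ≠ y (m + 1)}

/-- The action of `Aut(A^ℤ)` on `Ω`: `g • x = ψ (g (φ x))`, where
`ψ(y) = φ⁻¹(σ^{ℓ(y)} y)`, i.e. `(g • x) n = (g (φ x)) (ℓ (g (φ x)) + n)`. -/
noncomputable def omegaAct (A : Type*) [TopologicalSpace A]
    (g : (ℤ → A) ≃ₜ (ℤ → A)) (x : ℕ → A) : ℕ → A :=
  fun n => g (phiMap A x) (ellVal A (g (phiMap A x)) + n)

/-- `G* = ∩_{a ∈ A} G^a`, where `G^a` is the set of automorphisms that
preserve `Ω^a` under the action on `Ω`. -/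
def Gstar (A : Type*) [TopologicalSpace A] : Set ((ℤ → A) ≃ₜ (ℤ → A)) :=
  {g | g ∈ ShiftAut A ∧ ∀ a : A, omegaAct A g '' OmegaA A a = OmegaA A a}

/-- The metric on `ℕ → A` (with `A` discrete) inducing the product topology. -/
noncomputable local instance piNatMetric (A : Type*) [TopologicalSpace A]
    [DiscreteTopology A] : MetricSpace (ℕ → A) :=
  PiNat.metricSpace

/-! ### The toggling automorphism -/

/-- The window `[s, s + d)` is active in `y` if it contains either `a^d` or the word
`t = X 1 ⋯ X d`, the `d + n` symbols before it are all `a`, and the word `u` formed by the `n`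
symbols after it satisfies `u 0 ≠ a` and `u ≠ X 1 ⋯ X n`. -/
def Active {A : Type*} (a : A) (X : ℕ → A) (n d : ℕ) (y : ℤ → A) (s : ℤ) : Prop :=
  (∀ j : ℤ, s - (d + n) ≤ j → j < s → y j = a) ∧
  ((∀ j : ℤ, s ≤ j → j < s + d → y j = a) ∨
    (∀ j : ℤ, s ≤ j → j < s + d → y j = X (j - s + 1).toNat)) ∧
  y (s + d) ≠ a ∧
  ∃ j : ℤ, s + d ≤ j ∧ j < s + d + n ∧ y j ≠ X (j - (s + d) + 1).toNat

open Classical in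
/-- The cellular automaton exchanging `a^d` and `X 1 ⋯ X d` in every active window. When
`X 1 ≠ a`, the first symbol of the window tells which of the two words it contains. The window
covering `i` is picked by choice; it is unique under the hypotheses of `Active.far`. -/
noncomputable def toggle {A : Type*} (a : A) (X : ℕ → A) (n d : ℕ) (y : ℤ → A) : ℤ → A :=
  fun i => if h : ∃ s, Active a X n d y s ∧ s ≤ i ∧ i < s + d then
    (if y h.choose = a then X (i - h.choose + 1).toNat else a) else y i

section toggle

variable {A : Type*} {a : A} {X : ℕ → A} {n d : ℕ}

lemma Active.congr {y z : ℤ → A} {s : ℤ} (h : Active a X n d y s)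
    (hyz : ∀ j, s - (d + n) ≤ j → j < s + d + n → z j = y j) : Active a X n d z s := by
  obtain ⟨h1, h2, h3, j, hj1, hj2, hj3⟩ := h
  refine ⟨fun i hi hi' => ?_, ?_, ?_, j, hj1, hj2, ?_⟩
  · rw [hyz i hi (by omega)]; exact h1 i hi hi'
  · refine h2.imp (fun h2 i hi hi' => ?_) (fun h2 i hi hi' => ?_)
    · rw [hyz i (by omega) (by omega)]; exact h2 i hi hi'
    · rw [hyz i (by omega) (by omega)]; exact h2 i hi hi'
  · rw [hyz _ (by omega) (by omega)]; exact h3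
  · rw [hyz _ (by omega) (by omega)]; exact hj3

/-- Two active windows are so far apart that neither meets the other window or its left and
right contexts. The right context of the first window starts with a symbol other than `a`, which
the left context of the second cannot contain; so the second would have to start inside the first
or right after it. The only way its contents could then fit is `a^d` followed by `X 1 ⋯ X d` at
`s' = s + d`, and this is excluded because the right context differs from `X 1 ⋯ X n`. -/
lemma Active.far_of_lt (hX : X 1 ≠ a) (hd : 0 < d) (hn : n ≤ d) {y : ℤ → A} {s s' : ℤ}
    (h : Active a X n d y s) (h' : Active a X n d y s') (hs : s < s') :
    s + d + (d + n) < s' := by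
  by_contra hfar
  obtain ⟨h1, h2, h3, j, hj1, hj2, hj3⟩ := h
  obtain ⟨h1', h2', h3', -⟩ := h'
  have hle : s' ≤ s + d := by
    by_contra hlt
    exact h3 (h1' _ (by omega) (by omega))
  rcases h2 with h2 | h2
  · rcases h2' with h2' | h2'
    · exact h3 (h2' _ (by omega) (by omega))
    · have e : s' = s + d := by
        by_contra hne
        have := h2' s' le_rfl (by omega)
        rw [h2 s' (by omega) (by omega)] at this
        apply hX
        simpa using this.symm
      subst e
      exact hj3 (h2' j hj1 (by omega))
  · have e := h2 s le_rfl (by omega)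
    rw [h1' s (by omega) (by omega)] at e
    apply hX
    simpa using e.symm

lemma Active.far (hX : X 1 ≠ a) (hd : 0 < d) (hn : n ≤ d) {y : ℤ → A} {s s' : ℤ}
    (h : Active a X n d y s) (h' : Active a X n d y s') (hs : s ≠ s') :
    s + d + (d + n) < s' ∨ s' + d + (d + n) < s := by
  rcases lt_or_gt_of_ne hs with h0 | h0
  · exact Or.inl (h.far_of_lt hX hd hn h' h0)
  · exact Or.inr (h'.far_of_lt hX hd hn h h0)

lemma toggle_of_not {y : ℤ → A} {i : ℤ}
    (h : ∀ s, Active a X n d y s → s ≤ i → ¬ i < s + d) : toggle a X n d y i = y i := by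
  unfold toggle
  rw [dif_neg]
  rintro ⟨s, hs, h1, h2⟩
  exact h s hs h1 h2

open Classical in
lemma toggle_of_active (hX : X 1 ≠ a) (hd : 0 < d) (hn : n ≤ d) {y : ℤ → A} {s i : ℤ}
    (h : Active a X n d y s) (h1 : s ≤ i) (h2 : i < s + d) :
    toggle a X n d y i = if y s = a then X (i - s + 1).toNat else a := by
  have hex : ∃ s, Active a X n d y s ∧ s ≤ i ∧ i < s + d := ⟨s, h, h1, h2⟩
  have e : hex.choose = s := by
    obtain ⟨hc, hc1, hc2⟩ := hex.choose_spec
    by_contra hne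
    have := hc.far hX hd hn h hne
    omega
  unfold toggle
  rw [dif_pos hex, e]

lemma Active.toggle (hX : X 1 ≠ a) (hd : 0 < d) (hn : n ≤ d) {y : ℤ → A} {s : ℤ}
    (h : Active a X n d y s) : Active a X n d (toggle a X n d y) s := by
  have hout : ∀ j, s - (d + n) ≤ j → j < s + d + n → ¬ (s ≤ j ∧ j < s + d) →
      _root_.toggle a X n d y j = y j := by
    intro j hj1 hj2 hj3
    refine toggle_of_not fun s' hs' h1 h2 => ?_
    by_cases e : s = s'
    · subst e; exact hj3 ⟨h1, h2⟩
    · have := h.far hX hd hn hs' e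
      omega
  have hin := fun i => toggle_of_active (i := i) hX hd hn h
  obtain ⟨h1, h2, h3, j, hj1, hj2, hj3⟩ := h
  refine ⟨fun i hi hi' => ?_, ?_, ?_, j, hj1, hj2, ?_⟩
  · rw [hout i hi (by omega) (by omega)]; exact h1 i hi hi'
  · by_cases hy : y s = a
    · right
      intro i hi hi'
      rw [hin i hi hi', if_pos hy]
    · left
      intro i hi hi'
      rw [hin i hi hi', if_neg hy]
  · rw [hout _ (by omega) (by omega) (by omega)]; exact h3
  · rw [hout _ (by omega) (by omega) (by omega)]; exact hj3

/-- Toggling neither creates nor destroys active windows. This is what makes `toggle` an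
involution. -/
lemma active_toggle_iff (hX : X 1 ≠ a) (hd : 0 < d) (hn : n ≤ d) {y : ℤ → A} {s : ℤ} :
    Active a X n d (toggle a X n d y) s ↔ Active a X n d y s := by
  refine ⟨fun h => ?_, fun h => h.toggle hX hd hn⟩
  by_contra hs
  refine hs (h.congr fun j hj1 hj2 => (toggle_of_not fun s' hs' h1 h2 => ?_).symm)
  have hne : s ≠ s' := by rintro rfl; exact hs hs'
  have := h.far hX hd hn (hs'.toggle hX hd hn) hne
  omega

lemma toggle_toggle (hX : X 1 ≠ a) (hd : 0 < d) (hn : n ≤ d) (y : ℤ → A) :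
    toggle a X n d (toggle a X n d y) = y := by
  funext i
  by_cases hex : ∃ s, Active a X n d y s ∧ s ≤ i ∧ i < s + d
  · obtain ⟨s, hs, h1, h2⟩ := hex
    rw [toggle_of_active hX hd hn (hs.toggle hX hd hn) h1 h2,
      toggle_of_active hX hd hn hs le_rfl (by omega)]
    by_cases hy : y s = a
    · have h0 : ∀ j : ℤ, s ≤ j → j < s + d → y j = a := by
        rcases hs.2.1 with h | h
        · exact h
        · have := h s le_rfl (by omega)
          rw [hy] at this
          exact absurd (by simpa using this.symm) hX
      simp [hy, hX, h0 i h1 h2]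
    · rcases hs.2.1 with h | h
      · exact absurd (h s le_rfl (by omega)) hy
      · simp [hy, h i h1 h2]
  · rw [toggle_of_not, toggle_of_not]
    · exact fun s hs h1 h2 => hex ⟨s, hs, h1, h2⟩
    · exact fun s hs h1 h2 => hex ⟨s, (active_toggle_iff hX hd hn).1 hs, h1, h2⟩

/-- `toggle` is given by a local rule. -/
lemma toggle_congr (hX : X 1 ≠ a) (hd : 0 < d) (hn : n ≤ d) {y z : ℤ → A} {i : ℤ}
    (h : ∀ j, i - (2 * d + n) ≤ j → j ≤ i + d + n → z j = y j) :
    toggle a X n d z i = toggle a X n d y i := by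
  by_cases hex : ∃ s, Active a X n d y s ∧ s ≤ i ∧ i < s + d
  · obtain ⟨s, hs, h1, h2⟩ := hex
    have hs' : Active a X n d z s := hs.congr fun j hj1 hj2 => h j (by omega) (by omega)
    rw [toggle_of_active hX hd hn hs h1 h2, toggle_of_active hX hd hn hs' h1 h2,
      h s (by omega) (by omega)]
  · rw [toggle_of_not, toggle_of_not, h i (by omega) (by omega)]
    · exact fun s hs h1 h2 => hex ⟨s, hs, h1, h2⟩
    · exact fun s hs h1 h2 => hex ⟨s, hs.congr fun j hj1 hj2 =>
        (h j (by omega) (by omega)).symm, h1, h2⟩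

lemma active_translate {y : ℤ → A} {s : ℤ} (m : ℤ) :
    Active a X n d (fun i => y (i + m)) s ↔ Active a X n d y (s + m) := by
  constructor
  · rintro ⟨h1, h2, h3, j, hj1, hj2, hj3⟩
    refine ⟨fun i hi hi' => ?_, ?_, ?_, j + m, by omega, by omega, ?_⟩
    · simpa using h1 (i - m) (by omega) (by omega)
    · refine h2.imp (fun h2 i hi hi' => ?_) (fun h2 i hi hi' => ?_)
      · simpa using h2 (i - m) (by omega) (by omega)
      · have := h2 (i - m) (by omega) (by omega)
        rw [show i - (s + m) + 1 = i - m - s + 1 by ring]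
        simpa using this
    · rwa [show s + m + d = s + d + m by ring]
    · rwa [show j + m - (s + m + d) + 1 = j - (s + d) + 1 by ring]
  · rintro ⟨h1, h2, h3, j, hj1, hj2, hj3⟩
    refine ⟨fun i hi hi' => h1 (i + m) (by omega) (by omega), ?_, ?_,
      j - m, by omega, by omega, ?_⟩
    · refine h2.imp (fun h2 i hi hi' => h2 (i + m) (by omega) (by omega))
        (fun h2 i hi hi' => ?_)
      have := h2 (i + m) (by omega) (by omega)
      rwa [show i + m - (s + m) + 1 = i - s + 1 by ring] at this
    · change y (s + d + m) ≠ a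
      rwa [show s + d + m = s + m + d by ring]
    · rw [show j - m - (s + d) + 1 = j - (s + m + d) + 1 by ring]
      simpa using hj3

lemma toggle_translate (hX : X 1 ≠ a) (hd : 0 < d) (hn : n ≤ d) (y : ℤ → A) (m : ℤ) :
    toggle a X n d (fun i => y (i + m)) = fun i => toggle a X n d y (i + m) := by
  funext i
  by_cases hex : ∃ s, Active a X n d (fun i => y (i + m)) s ∧ s ≤ i ∧ i < s + d
  · obtain ⟨s, hs, h1, h2⟩ := hex
    rw [toggle_of_active hX hd hn hs h1 h2,
      toggle_of_active hX hd hn ((active_translate m).1 hs) (by omega) (by omega),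
      show i + m - (s + m) + 1 = i - s + 1 by ring]
  · rw [toggle_of_not, toggle_of_not]
    · intro s hs h1 h2
      refine hex ⟨s - m, (active_translate m).2 ?_, by omega, by omega⟩
      simpa using hs
    · exact fun s hs h1 h2 => hex ⟨s, hs, h1, h2⟩

lemma continuous_toggle [TopologicalSpace A] [DiscreteTopology A]
    (hX : X 1 ≠ a) (hd : 0 < d) (hn : n ≤ d) :
    Continuous (toggle a X n d) := by
  refine continuous_pi fun i => continuous_iff_continuousAt.2 fun y => ?_
  have hev : ∀ᶠ z in nhds y, ∀ j ∈ Finset.Icc (i - (2 * d + n)) (i + d + n), z j = y j := by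
    rw [Filter.eventually_all_finset]
    intro j _
    exact (continuous_apply j).continuousAt.eventually_mem
      ((isOpen_discrete {y j}).mem_nhds rfl)
  have : (fun z => toggle a X n d z i) =ᶠ[nhds y] fun _ => toggle a X n d y i := by
    filter_upwards [hev] with z hz
    exact toggle_congr hX hd hn fun j h1 h2 => hz j (Finset.mem_Icc.2 ⟨h1, h2⟩)
  exact continuousAt_const.congr this.symm

/-- The involution `toggle` as a homeomorphism of `A^ℤ`. -/
noncomputable def toggleHomeo [TopologicalSpace A] [DiscreteTopology A]
    (hX : X 1 ≠ a) (hd : 0 < d) (hn : n ≤ d) : (ℤ → A) ≃ₜ (ℤ → A) where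
  toFun := toggle a X n d
  invFun := toggle a X n d
  left_inv := toggle_toggle hX hd hn
  right_inv := toggle_toggle hX hd hn
  continuous_toFun := continuous_toggle hX hd hn
  continuous_invFun := continuous_toggle hX hd hn

/-- In a left tail constantly `b`, no window `[s, s + d)` is active if also position `s + d`
belongs to the tail: the symbols at `s - 1` and `s + d` of an active window are different. -/
lemma Active.lt_of_tail {b : A} {y : ℤ → A} {s r : ℤ} (hd : 0 < d) (hy : ∀ i ≤ r, y i = b)
    (h : Active a X n d y s) : r < s + d := by
  by_contra hlt
  obtain ⟨h1, -, h3, -⟩ := h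
  rw [hy _ (by omega)] at h3
  have := h1 (s - 1) (by omega) (by omega)
  rw [hy _ (by omega)] at this
  exact h3 this

lemma toggle_tail {b : A} {y : ℤ → A} {r : ℤ} (hd : 0 < d) (hy : ∀ i ≤ r, y i = b) :
    ∀ i ≤ r - d, toggle a X n d y i = b := by
  intro i hi
  rw [toggle_of_not, hy _ (by omega)]
  intro s hs h1 h2
  have := hs.lt_of_tail hd hy
  omega

lemma toggle_const (b : A) (hd : 0 < d) : toggle a X n d (fun _ => b) = fun _ => b :=
  funext fun i => toggle_tail (r := i + d) hd (fun _ _ => rfl) i (by omega)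

end toggle

/-! ### The induced action on `Ω` -/

lemma ellVal_eq {A : Type*} {b : A} {y : ℤ → A} {r : ℤ} (h : ∀ i ≤ r, y i = b)
    (h1 : y (r + 1) ≠ b) : ellVal A y = r := by
  refine IsLeast.csInf_eq ⟨?_, ?_⟩
  · change y r ≠ y (r + 1)
    rw [h r le_rfl]; exact h1.symm
  · intro m hm
    by_contra hlt
    exact hm (by rw [h m (by omega), h (m + 1) (by omega)])

/-- A nonconstant configuration with a constant left tail has a last position `l` of that
tail. -/
lemma exists_last_of_tail {A : Type*} {b : A} {y : ℤ → A} {r : ℤ} (h : ∀ i ≤ r, y i = b)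
    (hne : y ≠ fun _ => b) : ∃ l, (∀ i ≤ l, y i = b) ∧ y (l + 1) ≠ b := by
  obtain ⟨j, hj⟩ := Function.ne_iff.1 hne
  obtain ⟨m, hm, hmin⟩ := Int.exists_least_of_bdd (P := fun i => y i ≠ b)
    ⟨r, fun z hz => by by_contra hlt; exact hz (h z (by omega))⟩ ⟨j, hj⟩
  refine ⟨m - 1, fun i hi => ?_, by simpa using hm⟩
  by_contra hi'
  have := hmin i hi'
  omega

/-- `φ (ψ y) = σ^l y` for `y` with constant left tail ending at `l`. -/
lemma phiMap_of_tail {A : Type*} {b : A} {y : ℤ → A} {l : ℤ} (h : ∀ i ≤ l, y i = b) :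
    phiMap A (fun k => y (l + k)) = fun i => y (i + l) := by
  funext i
  unfold phiMap
  split_ifs with hi
  · change y (l + (0 : ℕ)) = _
    rw [h (l + (0 : ℕ)) (by simp), h (i + l) (by omega)]
  · change y (l + (i.toNat : ℤ)) = _
    congr 1; omega

lemma phiMap_nonpos {A : Type*} (x : ℕ → A) {i : ℤ} (hi : i ≤ 0) : phiMap A x i = x 0 := by
  simp [phiMap, hi]

lemma phiMap_nat {A : Type*} (x : ℕ → A) (k : ℕ) : phiMap A x k = x k := by
  unfold phiMap
  split_ifs with h
  · congr 1; omega
  · simp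

/-- `toggle` fixes the constant configurations and preserves left tails, so it maps each `Ω^b`
to itself; being an involution, it maps `Ω^b` onto itself. -/
lemma toggleHomeo_mem_Gstar {A : Type*} [TopologicalSpace A] [DiscreteTopology A]
    {a : A} {X : ℕ → A} {n d : ℕ} (hX : X 1 ≠ a) (hd : 0 < d) (hn : n ≤ d) :
    toggleHomeo hX hd hn ∈ Gstar A := by
  have key : ∀ b, ∀ x ∈ OmegaA A b, omegaAct A (toggleHomeo hX hd hn) x ∈ OmegaA A b ∧
      omegaAct A (toggleHomeo hX hd hn) (omegaAct A (toggleHomeo hX hd hn) x) = x := by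
    rintro b x ⟨hx0, hx1⟩
    have htail : ∀ i ≤ (0 : ℤ), phiMap A x i = b := fun i hi => by
      rw [phiMap_nonpos x hi, hx0]
    have hx1' : phiMap A x 1 ≠ b := by
      have := phiMap_nat x 1
      rw [Nat.cast_one] at this
      rw [this, ← hx0]; exact hx1.symm
    have hne : toggle a X n d (phiMap A x) ≠ fun _ => b := by
      intro h
      have := toggle_toggle hX hd hn (phiMap A x)
      rw [h, toggle_const b hd] at this
      exact hx1' (by rw [← this])
    obtain ⟨l, hl, hl1⟩ := exists_last_of_tail (toggle_tail (n := n) (a := a) (X := X) hd htail) hne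
    have hact : omegaAct A (toggleHomeo hX hd hn) x =
        fun k : ℕ => toggle a X n d (phiMap A x) (l + k) := by
      funext k
      change toggle a X n d (phiMap A x) (ellVal A (toggle a X n d (phiMap A x)) + k) = _
      rw [ellVal_eq hl hl1]
    constructor
    · rw [hact]
      have h0 := hl l le_rfl
      exact ⟨by simpa using h0, by simpa [h0] using hl1.symm⟩
    · have hphi : toggle a X n d (phiMap A (omegaAct A (toggleHomeo hX hd hn) x)) =
          fun i => phiMap A x (i + l) := by
        rw [hact, phiMap_of_tail hl, toggle_translate hX hd hn, toggle_toggle hX hd hn]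
      have hell : ellVal A (fun i => phiMap A x (i + l)) = -l :=
        ellVal_eq (b := b) (fun i hi => htail _ (by omega)) (by
          rwa [show -l + 1 + l = 1 by ring])
      funext k
      change toggle a X n d (phiMap A (omegaAct A (toggleHomeo hX hd hn) x))
        (ellVal A (toggle a X n d (phiMap A (omegaAct A (toggleHomeo hX hd hn) x))) + k) = _
      rw [hphi, hell]
      change phiMap A x (-l + k + l) = _
      rw [show -l + (k : ℤ) + l = k by ring, phiMap_nat]
  refine ⟨?_, fun b => ?_⟩
  · refine Subgroup.mem_centralizer_iff.2 ?_
    rintro _ rfl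
    ext y i
    exact (congrFun (toggle_translate hX hd hn y 1) i).symm
  · ext x
    constructor
    · rintro ⟨z, hz, rfl⟩
      exact (key b z hz).1
    · intro hx
      exact ⟨_, (key b x hx).1, (key b x hx).2⟩

/-- A point of `Ω^a` outside the cylinder of `X` acquires the prefix `X 0 ⋯ X d`: in `φ x` the
window `[1 - d, 1)`, which ends just before the first symbol different from `a`, is active and
contains `a^d`, so it is overwritten by `X 1 ⋯ X d`. -/
lemma omegaAct_toggleHomeo {A : Type*} [TopologicalSpace A] [DiscreteTopology A]
    {a : A} {X : ℕ → A} {n d : ℕ} (hX : X 1 ≠ a) (hd : 0 < d) (hn : n ≤ d)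
    (hX0 : X 0 = a) {x : ℕ → A} (hx : x ∈ OmegaA A a)
    (hxX : ∃ j < n, x (j + 1) ≠ X (j + 1)) (k : ℕ) (hk : k ≤ d) :
    omegaAct A (toggleHomeo hX hd hn) x k = X k := by
  obtain ⟨hx0, hx1⟩ := hx
  have htail : ∀ i ≤ (0 : ℤ), phiMap A x i = a := fun i hi => by
    rw [phiMap_nonpos x hi, hx0]
  have hact : Active a X n d (phiMap A x) (1 - d) := by
    obtain ⟨j, hj, hne⟩ := hxX
    refine ⟨fun i _ hi => htail i (by omega), Or.inl fun i _ hi => htail i (by omega),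
      ?_, j + 1, by omega, by omega, ?_⟩
    · have := phiMap_nat x 1
      rw [Nat.cast_one] at this
      rw [show (1 : ℤ) - d + d = 1 by ring, this, ← hx0]
      exact hx1.symm
    · have := phiMap_nat x (j + 1)
      rw [Nat.cast_add, Nat.cast_one] at this
      rw [this, show ((j : ℤ) + 1 - (1 - d + d) + 1) = ((j + 1 : ℕ) : ℤ) by push_cast; ring,
        Int.toNat_natCast]
      exact hne
  have hval : ∀ i : ℤ, 1 - d ≤ i → i ≤ 0 →
      toggle a X n d (phiMap A x) i = X (i - (1 - d) + 1).toNat := by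
    intro i h1 h2
    rw [toggle_of_active hX hd hn hact h1 (by omega), if_pos (htail _ (by omega))]
  have htail' : ∀ i ≤ -(d : ℤ), toggle a X n d (phiMap A x) i = a := fun i hi =>
    toggle_tail hd htail i (by omega)
  have hell : ellVal A (toggle a X n d (phiMap A x)) = -d := by
    refine ellVal_eq htail' ?_
    rw [hval _ (by omega) (by omega), show -(d : ℤ) + 1 - (1 - d) + 1 = (1 : ℕ) by push_cast; ring,
      Int.toNat_natCast]
    exact hX
  change toggle a X n d (phiMap A x) (ellVal A (toggle a X n d (phiMap A x)) + k) = _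
  rw [hell]
  rcases Nat.eq_zero_or_pos k with rfl | hk0
  · rw [htail' _ (by simp), hX0]
  · rw [hval _ (by omega) (by omega)]
    congr 1
    omega

/-- The action of `G*` on `Ω^a` is extremely proximal: for every closed proper
nonempty subset `Y` of `Ω^a` there is a sequence in `G*` moving `Y` to a
singleton in the Hausdorff metric. -/
theorem gstar_extremelyProximal
    (A : Type*) [Fintype A] [TopologicalSpace A] [DiscreteTopology A]
    (hA : 2 ≤ Fintype.card A) (a : A) :
    ∀ Y : Set (ℕ → A), Y ⊆ OmegaA A a → IsClosed Y → Y.Nonempty → Y ≠ OmegaA A a →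
      ∃ (g : ℕ → (ℤ → A) ≃ₜ (ℤ → A)) (x : ℕ → A),
        (∀ k, g k ∈ Gstar A) ∧ x ∈ OmegaA A a ∧
        Tendsto (fun k => Metric.hausdorffDist (omegaAct A (g k) '' Y) {x})
          atTop (nhds 0) := by
  intro Y hYsub hYc hYne hY
  obtain ⟨X, hXmem, hXY⟩ : ∃ X ∈ OmegaA A a, X ∉ Y := by
    by_contra! h
    exact hY (hYsub.antisymm h)
  obtain ⟨hX0, hX01⟩ := hXmem
  have hX : X 1 ≠ a := by rw [← hX0]; exact hX01.symm
  obtain ⟨n, hdisj⟩ := PiNat.exists_disjoint_cylinder hYc hXY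
  have hdiff : ∀ y ∈ Y, ∃ j < n, y (j + 1) ≠ X (j + 1) := by
    intro y hy
    by_contra! h
    refine Set.disjoint_left.1 hdisj hy ?_
    intro i hi
    rcases i with _ | i
    · rw [(hYsub hy).1, hX0]
    · exact h i (by omega)
  -- `toggle` with window length `n + k + 1` is the `k`-th element of the sequence.
  have hd : ∀ k, 0 < n + k + 1 := fun k => by omega
  have hn : ∀ k, n ≤ n + k + 1 := fun k => by omega
  refine ⟨fun k => toggleHomeo hX (hd k) (hn k), X,
    fun k => toggleHomeo_mem_Gstar hX (hd k) (hn k), ⟨hX0, hX01⟩, ?_⟩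
  have hdist : ∀ k, ∀ y ∈ Y,
      dist (omegaAct A (toggleHomeo hX (hd k) (hn k)) y) X ≤ (1 / 2 : ℝ) ^ k := by
    intro k y hy
    refine PiNat.mem_cylinder_iff_dist_le.1 fun i hi => ?_
    exact omegaAct_toggleHomeo hX (hd k) (hn k) hX0 (hYsub hy) (hdiff y hy) i (by omega)
  refine squeeze_zero (fun _ => Metric.hausdorffDist_nonneg) (fun k => ?_)
    (tendsto_pow_atTop_nhds_zero_of_lt_one (r := (1 / 2 : ℝ)) (by norm_num) (by norm_num))
  refine Metric.hausdorffDist_le_of_mem_dist (by positivity) ?_ ?_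
  · rintro _ ⟨y, hy, rfl⟩
    exact ⟨X, rfl, hdist k y hy⟩
  · rintro _ rfl
    obtain ⟨y, hy⟩ := hYne
    exact ⟨_, ⟨y, hy, rfl⟩, by rw [dist_comm]; exact hdist k y hy⟩
end
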